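/- For every n ≥ 2, the outer automorphism group Out(F_n) = Aut(F_n)/Inn(F_n) of the free group F_n of rank n has uniformly exponential growth, i.e., ω(Out(F_n)) > 1. -/

import Mathlib

open Filter

variable {G : Type*} [Group G]

noncomputable def wordLength (S : Set G) (g : G) : ℕ :=
  sInf {k | ∃ w : List G, w.length = k ∧ (∀ x ∈ w, x ∈ S ∨ x⁻¹ ∈ S) ∧ w.prod = g}

noncomputable def ballCard (S : Set G) (n : ℕ) : ℕ :=
  Set.ncard {g : G | wordLength S g ≤ n}

noncomputable def growthRate (S : Set G) : ℝ :=
  limUnder atTop (fun n : ℕ => (ballCard S n : ℝ) ^ ((n : ℝ)⁻¹))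

noncomputable def minGrowth (G : Type*) [Group G] : ℝ :=
  sInf {x : ℝ | ∃ S : Finset G, Subgroup.closure (S : Set G) = ⊤ ∧ growthRate (S : Set G) = x}

/-- The subgroup of inner automorphisms is normal in the automorphism group. -/
instance conjRange_normal (H : Type*) [Group H] :
    (MulAut.conj : H →* MulAut H).range.Normal := by
  constructor
  intro x hx φ
  obtain ⟨g, rfl⟩ := hx
  refine ⟨φ g, ?_⟩
  ext y
  simp [MulAut.conj]

/-!
The action on `ℤⁿ` maps `Out(Fₙ)` to `GLₙ(ℤ)`, and onto a group containing `SLₙ(ℤ/p)` for every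
prime `p`. Any finitely generated group with such a representation has uniformly exponential growth.

Fix a large prime `p` and matrices `gᵢ` forming a basis of the space of `n × n` matrices over
`ℤ/p`, each paired with some `sᵢ` in general position. For every generating set they are the
reductions of words `uᵢ`, `tᵢ` of length at most `R`, where `R` depends only on `n`. Polynomial
invariants of these integer matrices that do not vanish mod `p` are nonzero integers, hence at least
`1` in absolute value. Let `Λ` be the largest absolute value of a trace on the ball of radius
`2 R + 1`, attained at `w`. Traces of short words determine the regular representation in the basis
`uᵢ`, so all of its entries at short words, and with them their spectral projections and the
inverses of their invariants, are bounded by powers of `Λ` with exponents independent of the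
generating set.

Let `e` be the order of `GLₙ(ℤ/p)`. For suitable `m` some `A = w ^ (m e) uᵢ` has trace larger than
`Λ`, because otherwise the powers of `w` would remain bounded in terms of `Λ`. Since `A` reduces to
`gᵢ`, the pair `(A, tᵢ)` is still in general position, and the eigenvalues of `A` have a gap which
is a fixed power of `Λ`. A ping-pong argument then shows that `A ^ N` and `tᵢ A ^ N` generate a free
semigroup for some `N` independent of the generating set.
-/

section Growth

open scoped Pointwise

/-- The ball of radius `k` about `1` in the Cayley graph of `S`, written as the `k`-th pointwise
power of the ball of radius one. -/
def wordBall (S : Set G) (k : ℕ) : Set G := (insert 1 (S ∪ S⁻¹)) ^ k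

variable {S : Set G} {k l : ℕ} {g h : G}

theorem one_mem_wordBall (S : Set G) (k : ℕ) : (1 : G) ∈ wordBall S k :=
  Set.one_mem_pow (Set.mem_insert _ _)

theorem wordBall_mono (S : Set G) (hkl : k ≤ l) : wordBall S k ⊆ wordBall S l :=
  Set.pow_subset_pow_right (Set.mem_insert _ _) hkl

theorem wordBall_add (S : Set G) (k l : ℕ) : wordBall S (k + l) = wordBall S k * wordBall S l :=
  pow_add _ k l

theorem mul_mem_wordBall (hg : g ∈ wordBall S k) (hh : h ∈ wordBall S l) :
    g * h ∈ wordBall S (k + l) :=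
  wordBall_add S k l ▸ Set.mul_mem_mul hg hh

theorem pow_mem_wordBall (hg : g ∈ wordBall S k) (m : ℕ) : g ^ m ∈ wordBall S (k * m) := by
  rw [wordBall, pow_mul]
  exact Set.pow_mem_pow hg

theorem inv_wordBall (S : Set G) (k : ℕ) : (wordBall S k)⁻¹ = wordBall S k := by
  rw [wordBall, ← inv_pow, Set.inv_insert, inv_one, Set.union_inv, inv_inv, Set.union_comm]

theorem inv_mem_wordBall (hg : g ∈ wordBall S k) : g⁻¹ ∈ wordBall S k := by
  rwa [← inv_wordBall, Set.inv_mem_inv]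

theorem finite_wordBall (hS : S.Finite) (k : ℕ) : (wordBall S k).Finite := by
  induction k with
  | zero => simp [wordBall]
  | succ k ih =>
    rw [wordBall, pow_succ]
    exact ih.mul ((hS.union hS.inv).insert 1)

theorem list_prod_mem_wordBall {w : List G} (hw : ∀ x ∈ w, x ∈ wordBall S k) :
    w.prod ∈ wordBall S (k * w.length) := by
  induction w with
  | nil => exact one_mem_wordBall S _
  | cons x w ih =>
    rw [List.forall_mem_cons] at hw
    rw [List.prod_cons, List.length_cons, Nat.mul_succ, add_comm]
    exact mul_mem_wordBall hw.1 (ih hw.2)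

theorem mem_wordBall_iff_exists_list :
    g ∈ wordBall S k ↔ ∃ w : List G, w.length ≤ k ∧ (∀ x ∈ w, x ∈ S ∨ x⁻¹ ∈ S) ∧ w.prod = g := by
  constructor
  · intro hg
    induction k generalizing g with
    | zero => exact ⟨[], le_rfl, by simp, by simpa [wordBall, eq_comm] using hg⟩
    | succ k ih =>
      obtain ⟨x, hx, y, hy, rfl⟩ := by simpa only [wordBall, pow_succ'] using hg
      obtain ⟨w, hlen, hw, rfl⟩ := ih hy
      obtain rfl | hx := hx
      · exact ⟨w, hlen.trans k.le_succ, hw, (one_mul _).symm⟩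
      · exact ⟨x :: w, Nat.succ_le_succ hlen, List.forall_mem_cons.2 ⟨hx, hw⟩, List.prod_cons⟩
  · rintro ⟨w, hlen, hw, rfl⟩
    refine wordBall_mono S hlen ?_
    have hw₁ : ∀ x ∈ w, x ∈ wordBall S 1 := fun x hx => by
      rw [wordBall, pow_one]
      exact Or.inr (hw x hx)
    simpa using list_prod_mem_wordBall hw₁

theorem exists_mem_wordBall (hS : Subgroup.closure S = ⊤) (g : G) : ∃ k, g ∈ wordBall S k := by
  have hg : g ∈ Subgroup.closure S := hS ▸ Subgroup.mem_top g
  induction hg using Subgroup.closure_induction with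
  | mem x hx => exact ⟨1, by simp [wordBall, hx]⟩
  | one => exact ⟨0, one_mem_wordBall S 0⟩
  | mul x y _ _ hx hy =>
    obtain ⟨k, hk⟩ := hx
    obtain ⟨l, hl⟩ := hy
    exact ⟨k + l, mul_mem_wordBall hk hl⟩
  | inv x _ hx =>
    obtain ⟨k, hk⟩ := hx
    exact ⟨k, inv_mem_wordBall hk⟩

theorem wordLength_le_iff (hS : Subgroup.closure S = ⊤) :
    wordLength S g ≤ k ↔ g ∈ wordBall S k := by
  constructor
  · intro hk
    obtain ⟨l, hl⟩ := exists_mem_wordBall hS g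
    obtain ⟨w, -, hw⟩ := mem_wordBall_iff_exists_list.1 hl
    have hne : {k | ∃ w : List G, w.length = k ∧ (∀ x ∈ w, x ∈ S ∨ x⁻¹ ∈ S) ∧
        w.prod = g}.Nonempty := ⟨w.length, w, rfl, hw⟩
    obtain ⟨v, hlen, hv⟩ := Nat.sInf_mem hne
    exact mem_wordBall_iff_exists_list.2 ⟨v, hlen.trans_le hk, hv⟩
  · intro hg
    obtain ⟨w, hlen, hw⟩ := mem_wordBall_iff_exists_list.1 hg
    refine le_trans (Nat.sInf_le ?_) hlen
    exact ⟨w, rfl, hw⟩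

theorem ballCard_eq_ncard_wordBall (hS : Subgroup.closure S = ⊤) (k : ℕ) :
    ballCard S k = (wordBall S k).ncard := by
  rw [ballCard]
  congr 1
  ext g
  exact wordLength_le_iff hS

theorem ballCard_pos (hS : Subgroup.closure S = ⊤) (hfin : S.Finite) (k : ℕ) :
    0 < ballCard S k := by
  rw [ballCard_eq_ncard_wordBall hS, Set.ncard_pos (finite_wordBall hfin k)]
  exact ⟨1, one_mem_wordBall S k⟩

theorem ballCard_add_le (hS : Subgroup.closure S = ⊤) (k l : ℕ) :
    ballCard S (k + l) ≤ ballCard S k * ballCard S l := by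
  simp only [ballCard_eq_ncard_wordBall hS, wordBall_add, ← Nat.card_coe_set_eq]
  exact Set.natCard_mul_le

theorem subadditive_log_ballCard (hS : Subgroup.closure S = ⊤) (hfin : S.Finite) :
    Subadditive fun k => Real.log (ballCard S k) := by
  have hpos : ∀ k, (0 : ℝ) < ballCard S k := fun k => Nat.cast_pos.2 (ballCard_pos hS hfin k)
  intro k l
  rw [← Real.log_mul (hpos k).ne' (hpos l).ne']
  exact Real.log_le_log (hpos _) (mod_cast ballCard_add_le hS k l)

theorem bddBelow_range_log_ballCard_div (S : Set G) :
    BddBelow (Set.range fun k : ℕ => Real.log (ballCard S k) / k) := by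
  refine ⟨0, ?_⟩
  rintro _ ⟨k, rfl⟩
  exact div_nonneg (Real.log_natCast_nonneg _) k.cast_nonneg

theorem growthRate_eq_exp_lim (hS : Subgroup.closure S = ⊤) (hfin : S.Finite) :
    growthRate S = Real.exp (subadditive_log_ballCard hS hfin).lim := by
  refine Tendsto.limUnder_eq (((Real.continuous_exp.tendsto _).comp
    ((subadditive_log_ballCard hS hfin).tendsto_lim
      (bddBelow_range_log_ballCard_div S))).congr fun k => ?_)
  rw [Function.comp_apply, Real.rpow_def_of_pos (Nat.cast_pos.2 (ballCard_pos hS hfin k)),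
    div_eq_mul_inv]

theorem exp_log_div_le_growthRate (hS : Subgroup.closure S = ⊤) (hfin : S.Finite) {m L : ℕ}
    (hm : 0 < m) (hL : 0 < L) (hcard : ∀ k, m ^ k ≤ ballCard S (L * k)) :
    Real.exp (Real.log m / L) ≤ growthRate S := by
  have hsubseq : Tendsto (fun k : ℕ => L * k) atTop atTop := tendsto_id.const_mul_atTop' hL
  have hlim := (subadditive_log_ballCard hS hfin).tendsto_lim (bddBelow_range_log_ballCard_div S)
  rw [growthRate_eq_exp_lim hS hfin, Real.exp_le_exp]
  refine ge_of_tendsto (hlim.comp hsubseq) ?_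
  filter_upwards [eventually_gt_atTop 0] with k hk
  have hlog : k * Real.log m ≤ Real.log (ballCard S (L * k)) := by
    rw [← Real.log_pow]
    exact Real.log_le_log (by positivity) (mod_cast hcard k)
  rw [Function.comp_apply, Nat.cast_mul, ← div_div, div_right_comm]
  gcongr
  rwa [le_div_iff₀' (by positivity)]

/-- The value in a monoid of a positive word in two letters `a` and `b`, encoded by the list of
its letters (`false` stands for `a` and `true` for `b`). -/
def boolWord {M : Type*} [Monoid M] (a b : M) (l : List Bool) : M :=
  (l.map fun c => cond c b a).prod

/-- Positive words of equal length in `a` and `b` have distinct values. In a group this amounts to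
saying that `a` and `b` freely generate a free monoid. -/
def SeparatesWords {M : Type*} [Monoid M] (a b : M) : Prop :=
  ∀ l l' : List Bool, l.length = l'.length → boolWord a b l = boolWord a b l' → l = l'

section boolWord

variable {M N : Type*} [Monoid M] [Monoid N] {a b : M}

@[simp]
theorem boolWord_cons (a b : M) (c : Bool) (l : List Bool) :
    boolWord a b (c :: l) = cond c b a * boolWord a b l := by
  rw [boolWord, List.map_cons, List.prod_cons, boolWord]

theorem map_boolWord (f : M →* N) (a b : M) (l : List Bool) :
    f (boolWord a b l) = boolWord (f a) (f b) l := by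
  induction l with
  | nil => exact map_one f
  | cons c l ih => cases c <;> simp [ih]

theorem SeparatesWords.of_map (f : M →* N) (h : SeparatesWords (f a) (f b)) :
    SeparatesWords a b := fun l l' hlen heq =>
  h l l' hlen (by rw [← map_boolWord, ← map_boolWord, heq])

theorem separatesWords_of_ne (ha : IsLeftRegular a) (hb : IsLeftRegular b)
    (hne : ∀ l l', a * boolWord a b l ≠ b * boolWord a b l') : SeparatesWords a b := by
  intro l
  induction l with
  | nil => exact fun l' hlen _ => (List.length_eq_zero_iff.1 hlen.symm).symm
  | cons c l ih =>
    rintro (_ | ⟨c', l'⟩) hlen heq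
    · cases hlen
    replace hlen : l.length = l'.length := Nat.succ.inj hlen
    rw [boolWord_cons, boolWord_cons] at heq
    cases c <;> cases c'
    · rw [ih l' hlen (ha heq)]
    · exact absurd heq (hne l l')
    · exact absurd heq.symm (hne l' l)
    · rw [ih l' hlen (hb heq)]

end boolWord

theorem SeparatesWords.two_pow_le_ballCard (hS : Subgroup.closure S = ⊤) (hfin : S.Finite)
    {a b : G} {L : ℕ} (ha : a ∈ wordBall S L) (hb : b ∈ wordBall S L) (hab : SeparatesWords a b)
    (k : ℕ) : 2 ^ k ≤ ballCard S (L * k) := by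
  have hinj : Function.Injective fun v : List.Vector Bool k => boolWord a b v.1 :=
    fun v v' h => Subtype.ext (hab _ _ (v.2.trans v'.2.symm) h)
  have hcard : (Set.range fun v : List.Vector Bool k => boolWord a b v.1).ncard = 2 ^ k := by
    rw [← Set.image_univ, Set.ncard_image_of_injective _ hinj, Set.ncard_univ,
      Nat.card_eq_fintype_card, card_vector, Fintype.card_bool]
  rw [ballCard_eq_ncard_wordBall hS, ← hcard]
  refine Set.ncard_le_ncard ?_ (finite_wordBall hfin _)
  rintro _ ⟨⟨l, rfl⟩, rfl⟩
  have hletters : ∀ x ∈ l.map fun c => cond c b a, x ∈ wordBall S L := by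
    rw [List.forall_mem_map]
    rintro (_ | _) -
    exacts [ha, hb]
  simpa only [List.length_map, boolWord] using list_prod_mem_wordBall hletters

theorem one_lt_minGrowth (hfg : Group.FG G) {L : ℕ} (hL : 0 < L)
    (h : ∀ S : Finset G, Subgroup.closure (S : Set G) = ⊤ →
      ∃ a ∈ wordBall (S : Set G) L, ∃ b ∈ wordBall (S : Set G) L, SeparatesWords a b) :
    1 < minGrowth G := by
  have hlog : 0 < Real.log (2 : ℕ) / L := div_pos (Real.log_pos (by norm_num)) (mod_cast hL)
  refine (Real.one_lt_exp_iff.2 hlog).trans_le (le_csInf ?_ ?_)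
  · obtain ⟨S, hS⟩ := hfg.out
    exact ⟨_, S, hS, rfl⟩
  · rintro _ ⟨S, hS, rfl⟩
    obtain ⟨a, ha, b, hb, hab⟩ := h S hS
    exact exp_log_div_le_growthRate hS S.finite_toSet two_pos hL
      (hab.two_pow_le_ballCard hS S.finite_toSet ha hb)

end Growth

section GromovProduct

open FreeGroup

variable {α : Type*}

theorem exists_eq_append_and_head?_ne (l₁ l₂ : List α) :
    ∃ p r₁ r₂, l₁ = p ++ r₁ ∧ l₂ = p ++ r₂ ∧ ∀ x ∈ r₁.head?, ∀ y ∈ r₂.head?, x ≠ y := by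
  classical
  induction l₁ generalizing l₂ with
  | nil => exact ⟨[], [], l₂, by simp⟩
  | cons a l ih =>
    cases l₂ with
    | nil => exact ⟨[], a :: l, [], by simp⟩
    | cons b m =>
      by_cases hab : a = b
      · obtain ⟨p, r₁, r₂, rfl, rfl, hne⟩ := ih m
        exact ⟨a :: p, r₁, r₂, rfl, by rw [hab, List.cons_append], hne⟩
      · exact ⟨[], a :: l, b :: m, by simpa using hab⟩

theorem isReduced_invRev {l : List (α × Bool)} (hl : FreeGroup.IsReduced l) :
    FreeGroup.IsReduced (invRev l) := by
  classical
  rw [isReduced_iff_reduce_eq, reduce_invRev, hl.reduce_eq]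

theorem isReduced_invRev_append {r₁ r₂ : List (α × Bool)} (h₁ : FreeGroup.IsReduced r₁)
    (h₂ : FreeGroup.IsReduced r₂) (hne : ∀ x ∈ r₁.head?, ∀ y ∈ r₂.head?, x ≠ y) :
    FreeGroup.IsReduced (invRev r₁ ++ r₂) := by
  refine List.isChain_append.2 ⟨isReduced_invRev h₁, h₂, fun x hx y hy hxy => ?_⟩
  obtain ⟨z, hz, rfl⟩ : ∃ z ∈ r₁.head?, (z.1, !z.2) = x := by
    simpa [invRev, List.getLast?_reverse] using hx
  by_contra hneg
  exact hne z hz y hy (Prod.ext hxy (by simpa using hneg))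

variable [DecidableEq α]

/-- Twice the Gromov product of `a` and `b` in the Cayley tree of the free group, that is, twice
the length of the longest common initial segment of their reduced words. -/
def gromovProd (a b : FreeGroup α) : ℤ := (norm a : ℤ) + norm b - norm (a⁻¹ * b)

theorem exists_common_prefix (a b : FreeGroup α) : ∃ p r₁ r₂, a.toWord = p ++ r₁ ∧
    b.toWord = p ++ r₂ ∧ (∀ x ∈ r₁.head?, ∀ y ∈ r₂.head?, x ≠ y) ∧
    gromovProd a b = 2 * (p.length : ℤ) := by
  obtain ⟨p, r₁, r₂, ha, hb, hne⟩ := exists_eq_append_and_head?_ne a.toWord b.toWord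
  have hred₁ : FreeGroup.IsReduced r₁ := List.IsChain.right_of_append (ha ▸ isReduced_toWord)
  have hred₂ : FreeGroup.IsReduced r₂ := List.IsChain.right_of_append (hb ▸ isReduced_toWord)
  have hab : a⁻¹ * b = mk (invRev r₁ ++ r₂) := by
    rw [← mk_toWord (x := a), ← mk_toWord (x := b), ha, hb, ← mul_mk, ← mul_mk, ← mul_mk, ← inv_mk]
    group
  refine ⟨p, r₁, r₂, ha, hb, hne, ?_⟩
  rw [gromovProd, hab, FreeGroup.norm, FreeGroup.norm, FreeGroup.norm, toWord_mk,
    (isReduced_invRev_append hred₁ hred₂ hne).reduce_eq, ha, hb]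
  simp only [List.length_append, invRev_length]
  push_cast
  ring

theorem two_mul_le_gromovProd_iff (a b : FreeGroup α) (k : ℕ) :
    2 * (k : ℤ) ≤ gromovProd a b ↔
      k ≤ norm a ∧ k ≤ norm b ∧ a.toWord.take k = b.toWord.take k := by
  obtain ⟨p, r₁, r₂, ha, hb, hne, hprod⟩ := exists_common_prefix a b
  rw [hprod, FreeGroup.norm, FreeGroup.norm, ha, hb, List.length_append, List.length_append]
  constructor
  · intro hk
    have hk : k ≤ p.length := by omega
    rw [List.take_append_of_le_length hk, List.take_append_of_le_length hk]
    exact ⟨by omega, by omega, rfl⟩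
  · rintro ⟨h₁, h₂, htake⟩
    by_contra! hk
    have hk : p.length < k := by omega
    obtain ⟨x, r₁, rfl⟩ := List.exists_cons_of_length_pos (show 0 < r₁.length by omega)
    obtain ⟨y, r₂, rfl⟩ := List.exists_cons_of_length_pos (show 0 < r₂.length by omega)
    have hget := congrArg (fun l => l[p.length]?) htake
    exact hne x rfl y rfl (by simpa [List.getElem?_take, hk] using hget)

theorem exists_gromovProd_eq_two_mul (a b : FreeGroup α) : ∃ k : ℕ, gromovProd a b = 2 * k := by
  obtain ⟨p, -, -, -, -, -, hprod⟩ := exists_common_prefix a b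
  exact ⟨p.length, hprod⟩

theorem norm_inv_mul_comm (a b : FreeGroup α) : norm (a⁻¹ * b) = norm (b⁻¹ * a) := by
  rw [← norm_inv_eq, mul_inv_rev, inv_inv]

theorem gromovProd_comm (a b : FreeGroup α) : gromovProd a b = gromovProd b a := by
  rw [gromovProd, gromovProd, norm_inv_mul_comm]
  ring

theorem gromovProd_self (a : FreeGroup α) : gromovProd a a = 2 * norm a := by
  rw [gromovProd, inv_mul_cancel, FreeGroup.norm_one]
  ring

theorem gromovProd_inv_left (a b : FreeGroup α) :
    gromovProd a⁻¹ b = norm a + norm b - norm (a * b) := by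
  rw [gromovProd, norm_inv_eq, inv_inv]

theorem min_gromovProd_le (a b c : FreeGroup α) :
    min (gromovProd a b) (gromovProd b c) ≤ gromovProd a c := by
  obtain ⟨k, hk⟩ := exists_gromovProd_eq_two_mul a b
  obtain ⟨l, hl⟩ := exists_gromovProd_eq_two_mul b c
  obtain ⟨ha, -, hab⟩ := (two_mul_le_gromovProd_iff a b (min k l)).1 (by push_cast; omega)
  obtain ⟨-, hc, hbc⟩ := (two_mul_le_gromovProd_iff b c (min k l)).1 (by push_cast; omega)
  have hac := (two_mul_le_gromovProd_iff a c (min k l)).2 ⟨ha, hc, hab.trans hbc⟩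
  push_cast at hac
  omega

theorem norm_lt_norm_mul_self {a : FreeGroup α} (ha : a ≠ 1) : norm a < norm (a * a) := by
  have hconj := reduceCyclically.conj_conjugator_reduceCyclically a.toWord
  have hsq := reduceCyclically.reduce_flatten_replicate_succ (isReduced_toWord (x := a)) 1
  have hlen : (reduceCyclically a.toWord).length ≠ 0 := by
    rw [Ne, List.length_eq_zero_iff]
    intro hnil
    rw [hnil, List.append_nil] at hconj
    exact ha (by rw [← mk_toWord (x := a), ← hconj, ← mul_mk, ← inv_mk, mul_inv_cancel])
  have hword : (a * a).toWord = reduce (List.replicate 2 a.toWord).flatten := by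
    simp [toWord_mul, List.replicate_succ]
  rw [FreeGroup.norm, FreeGroup.norm, hword, hsq, ← congrArg List.length hconj]
  simp only [List.length_append, List.replicate_succ, List.replicate_zero, List.flatten_cons,
    List.flatten_nil, List.length_nil, invRev_length]
  omega

theorem gromovProd_inv_self_lt {a : FreeGroup α} (ha : a ≠ 1) : gromovProd a⁻¹ a < norm a := by
  have := norm_lt_norm_mul_self ha
  rw [gromovProd_inv_left]
  omega

end GromovProduct

section NielsenReduced

open FreeGroup

variable {ι α : Type*} [DecidableEq α]

/-- The entry of the family `u` named by a signed index: `u i` for `(i, true)` and its inverse for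
`(i, false)`. This is the encoding of letters used by `FreeGroup`. -/
def signedEntry {H : Type*} [Group H] (u : ι → H) (x : ι × Bool) : H := cond x.2 (u x.1) (u x.1)⁻¹

theorem signedEntry_not {H : Type*} [Group H] (u : ι → H) (x : ι × Bool) :
    signedEntry u (x.1, !x.2) = (signedEntry u x)⁻¹ := by
  rcases x with ⟨i, _ | _⟩ <;> simp [signedEntry]

theorem signedEntry_ne_one {H : Type*} [Group H] {u : ι → H} (hu : ∀ i, u i ≠ 1) (x : ι × Bool) :
    signedEntry u x ≠ 1 := by
  rcases x with ⟨i, _ | _⟩ <;> simp [signedEntry, hu]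

theorem lift_mk_cons {H : Type*} [Group H] (u : ι → H) (x : ι × Bool) (l : List (ι × Bool)) :
    lift u (mk (x :: l)) = signedEntry u x * lift u (mk l) := by
  simp only [lift_mk, List.map_cons, List.prod_cons, signedEntry]

/-- Nielsen reduced families: nontrivial entries such that in a product of two signed entries that
are not mutually inverse at most half of each factor cancels, and in a product of three such
entries the middle factor does not cancel completely. -/
structure IsNielsenReduced (u : ι → FreeGroup α) : Prop where
  ne_one : ∀ i, u i ≠ 1
  gromovProd_le : ∀ x y : ι × Bool, (x.1 = y.1 → x.2 = y.2) →
    gromovProd (signedEntry u x)⁻¹ (signedEntry u y) ≤ norm (signedEntry u y)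
  gromovProd_add_lt : ∀ x y z : ι × Bool, (x.1 = y.1 → x.2 = y.2) → (y.1 = z.1 → y.2 = z.2) →
    gromovProd (signedEntry u x)⁻¹ (signedEntry u y) +
      gromovProd (signedEntry u y)⁻¹ (signedEntry u z) < 2 * norm (signedEntry u y)

variable {u : ι → FreeGroup α}

/- The auxiliary letter `y` stands for the factor preceding `x` in a longer word: only half of the
cancellation between `y` and `x` is charged to `x`, so that the letters can be treated one by one.
-/
theorem IsNielsenReduced.length_add_gromovProd_le (hu : IsNielsenReduced u)
    (l : List (ι × Bool)) (x : ι × Bool) (hl : FreeGroup.IsReduced (x :: l)) :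
    ∀ y : ι × Bool, (y.1 = x.1 → y.2 = x.2) →
      gromovProd (signedEntry u y)⁻¹ (signedEntry u x) <
        gromovProd (lift u (FreeGroup.mk (x :: l))) (signedEntry u x) ∧
      2 * ((x :: l).length : ℤ) + gromovProd (signedEntry u y)⁻¹ (signedEntry u x) ≤
        2 * norm (lift u (FreeGroup.mk (x :: l))) := by
  induction l generalizing x with
  | nil =>
    intro y hyx
    have hle := hu.gromovProd_le y x hyx
    have hx : norm (signedEntry u x) ≠ 0 := norm_eq_zero.not.2 (signedEntry_ne_one hu.ne_one x)
    obtain ⟨k, hk⟩ := exists_gromovProd_eq_two_mul (signedEntry u y)⁻¹ (signedEntry u x)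
    rw [lift_mk_cons, ← one_eq_mk, _root_.map_one, mul_one, gromovProd_self, List.length_singleton]
    omega
  | cons z l ih =>
    intro y hyx
    obtain ⟨hxz, hl⟩ := isReduced_cons_cons.1 hl
    obtain ⟨hlt, hle⟩ := ih z hl x hxz
    have hmid := hu.gromovProd_add_lt y x z hyx hxz
    rw [lift_mk_cons u x, List.length_cons]
    generalize lift u (FreeGroup.mk (z :: l)) = v at *
    have hcancel : gromovProd (signedEntry u x)⁻¹ v =
        gromovProd (signedEntry u x)⁻¹ (signedEntry u z) := by
      have h₁ := min_gromovProd_le (signedEntry u x)⁻¹ v (signedEntry u z)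
      have h₂ := min_gromovProd_le (signedEntry u x)⁻¹ (signedEntry u z) v
      have h₃ := gromovProd_comm v (signedEntry u z)
      omega
    have hprod : gromovProd (signedEntry u x * v) (signedEntry u x) =
        norm (signedEntry u x * v) + norm (signedEntry u x) - norm v := by
      rw [gromovProd, mul_inv_rev, inv_mul_cancel_right, norm_inv_eq]
    rw [gromovProd_inv_left] at hcancel
    obtain ⟨j, hj⟩ := exists_gromovProd_eq_two_mul (signedEntry u y)⁻¹ (signedEntry u x)
    obtain ⟨k, hk⟩ := exists_gromovProd_eq_two_mul (signedEntry u x)⁻¹ (signedEntry u z)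
    push_cast at hle ⊢
    omega

theorem IsNielsenReduced.norm_le_norm_lift [DecidableEq ι] (hu : IsNielsenReduced u)
    (g : FreeGroup ι) : norm g ≤ norm (lift u g) := by
  rw [FreeGroup.norm, ← congrArg (lift u) (mk_toWord (x := g))]
  have hred : FreeGroup.IsReduced g.toWord := isReduced_toWord
  rcases hword : g.toWord with _ | ⟨x, l⟩
  · exact Nat.zero_le _
  · have hle := (hu.length_add_gromovProd_le l x (hword ▸ hred) x fun _ => rfl).2
    obtain ⟨k, hk⟩ := exists_gromovProd_eq_two_mul (signedEntry u x)⁻¹ (signedEntry u x)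
    omega

end NielsenReduced

section NielsenMinimal

open FreeGroup

variable {ι : Type*} {n : ℕ}

/-- A numerical weight separating words of equal length in `n` letters and their inverses; it reads
a word as a numeral whose most significant digit is the last letter. -/
def wordWeight (l : List (Fin n × Bool)) : ℕ :=
  Nat.ofDigits (2 * n + 2) (l.map fun x => 2 * x.1.val + x.2.toNat)

theorem wordWeight_injOn {l m : List (Fin n × Bool)} (hlen : l.length = m.length)
    (h : wordWeight l = wordWeight m) : l = m := by
  have hdigit (l : List (Fin n × Bool)) :
      ∀ d ∈ l.map fun x => 2 * x.1.val + x.2.toNat, d < 2 * n + 2 := by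
    rw [List.forall_mem_map]
    intro x _
    have := x.1.isLt
    have := x.2.toNat_le
    omega
  have hmap := Nat.ofDigits_inj_of_len_eq (by omega) (by simpa using hlen) (hdigit l) (hdigit m) h
  refine List.map_injective_iff.2 ?_ hmap
  rintro ⟨i, _ | _⟩ ⟨j, _ | _⟩ hij <;> simp at hij ⊢ <;> omega

theorem wordWeight_append (l m : List (Fin n × Bool)) :
    wordWeight (l ++ m) = wordWeight l + (2 * n + 2) ^ l.length * wordWeight m := by
  simp [wordWeight, Nat.ofDigits_append]

/-- The weight of the initial half of the reduced word of `g`. -/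
def halfWeight (g : FreeGroup (Fin n)) : ℕ := wordWeight (g.toWord.take ((g.norm + 1) / 2))

/-- The quantity decreased by Nielsen reduction: the length of `g`, with ties resolved by the
weights of the initial halves of `g` and `g⁻¹`. -/
def nielsenMeasure (g : FreeGroup (Fin n)) : ℕ ×ₗ ℕ :=
  toLex (g.norm, halfWeight g + halfWeight g⁻¹)

theorem nielsenMeasure_inv (g : FreeGroup (Fin n)) : nielsenMeasure g⁻¹ = nielsenMeasure g := by
  simp only [nielsenMeasure, norm_inv_eq, inv_inv, add_comm]

theorem nielsenMeasure_lt_of_norm_lt {g h : FreeGroup (Fin n)} (hlt : g.norm < h.norm) :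
    nielsenMeasure g < nielsenMeasure h :=
  Prod.Lex.toLex_lt_toLex.2 (Or.inl hlt)

theorem toWord_mk_of_norm_eq_length {α : Type*} [DecidableEq α] {l : List (α × Bool)}
    (hl : (mk l).norm = l.length) : (mk l).toWord = l := by
  have hsub : (mk l).toWord.Sublist l := by
    rw [toWord_mk]
    exact reduce.red.sublist
  exact hsub.eq_of_length hl

theorem toWord_eq_take_append_invRev_take {α : Type*} [DecidableEq α] {g : FreeGroup α} {k : ℕ}
    (hg : g.norm = 2 * k) : g.toWord = g.toWord.take k ++ invRev (g⁻¹.toWord.take k) := by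
  have hlen : (invRev (g.toWord.drop k)).length = k := by
    rw [invRev_length, List.length_drop, ← FreeGroup.norm]
    omega
  have hinv : g⁻¹.toWord = invRev (g.toWord.drop k) ++ invRev (g.toWord.take k) := by
    rw [toWord_inv, ← invRev_append, List.take_append_drop]
  rw [hinv, List.take_left' hlen, invRev_invRev, List.take_append_drop]

theorem eq_one_of_halfWeight_inv_eq {g : FreeGroup (Fin n)} (hg : Even g.norm)
    (h : halfWeight g = halfWeight g⁻¹) : g = 1 := by
  obtain ⟨k, hk⟩ := hg.exists_two_nsmul
  rw [smul_eq_mul] at hk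
  have htake : g.toWord.take k = g⁻¹.toWord.take k := by
    refine wordWeight_injOn ?_ ?_
    · rw [List.length_take, List.length_take, ← FreeGroup.norm, ← FreeGroup.norm, norm_inv_eq]
    · simpa only [halfWeight, norm_inv_eq, hk, show (2 * k + 1) / 2 = k by omega] using h
  rw [← mk_toWord (x := g), toWord_eq_take_append_invRev_take hk, ← htake, ← mul_mk, ← inv_mk,
    mul_inv_cancel]

theorem toWord_mul_of_gromovProd_eq {α : Type*} [DecidableEq α] {b c : FreeGroup α} {k : ℕ}
    (hb : norm b = 2 * k) (hbc : gromovProd b⁻¹ c = 2 * k) :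
    (b * c).toWord = b.toWord.take k ++ c.toWord.drop k := by
  obtain ⟨-, hkc, htake⟩ := (two_mul_le_gromovProd_iff b⁻¹ c k).1 hbc.ge
  have hbw := toWord_eq_take_append_invRev_take hb
  have hcw : c.toWord = b⁻¹.toWord.take k ++ c.toWord.drop k := by
    rw [htake, List.take_append_drop]
  have hmk : b * c = mk (b.toWord.take k ++ c.toWord.drop k) := by
    generalize b.toWord.take k = p at *
    generalize b⁻¹.toWord.take k = q at *
    generalize c.toWord.drop k = r at *
    rw [← mk_toWord (x := b), ← mk_toWord (x := c), hbw, hcw, ← mul_mk, ← mul_mk, ← mul_mk,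
      ← inv_mk]
    group
  rw [gromovProd_inv_left] at hbc
  rw [hmk]
  refine toWord_mk_of_norm_eq_length ?_
  rw [← hmk, List.length_append, List.length_take, List.length_drop, ← FreeGroup.norm,
    ← FreeGroup.norm]
  omega

/- Multiplication by `b` replaces the initial half `b⁻¹.toWord.take k` of `c` by `b.toWord.take k`
and does not touch its terminal half. -/
theorem nielsenMeasure_mul_lt {b c : FreeGroup (Fin n)} (hbc : gromovProd b⁻¹ c = norm b)
    (hc : norm b ≤ norm c) (hlt : halfWeight b < halfWeight b⁻¹) :
    nielsenMeasure (b * c) < nielsenMeasure c := by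
  obtain ⟨k, hk⟩ := exists_gromovProd_eq_two_mul b⁻¹ c
  have hb : norm b = 2 * k := by omega
  have hbcw := toWord_mul_of_gromovProd_eq hb hk
  obtain ⟨-, -, htake⟩ := (two_mul_le_gromovProd_iff b⁻¹ c k).1 hk.ge
  have hcw : c.toWord = b⁻¹.toWord.take k ++ c.toWord.drop k := by
    rw [htake, List.take_append_drop]
  simp only [halfWeight, norm_inv_eq, hb, show (2 * k + 1) / 2 = k by omega] at hlt
  have hp : (b.toWord.take k).length = k := by
    rw [List.length_take, ← FreeGroup.norm]
    omega
  have hq : (b⁻¹.toWord.take k).length = k := by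
    rw [List.length_take, ← FreeGroup.norm, norm_inv_eq]
    omega
  have hr : (c.toWord.drop k).length = norm c - k := List.length_drop
  generalize b.toWord.take k = p at *
  generalize b⁻¹.toWord.take k = q at *
  generalize c.toWord.drop k = r at *
  have hnorm : norm (b * c) = norm c := by
    rw [gromovProd_inv_left] at hbc
    omega
  have hhead : halfWeight (b * c) < halfWeight c := by
    rw [halfWeight, halfWeight, hnorm, hbcw, hcw, List.take_append, List.take_append,
      wordWeight_append, wordWeight_append, List.take_of_length_le (l := p) (by omega),
      List.take_of_length_le (l := q) (by omega), hp, hq]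
    omega
  have htail : halfWeight (b * c)⁻¹ = halfWeight c⁻¹ := by
    have hle : (norm c + 1) / 2 ≤ (invRev r).length := by
      rw [invRev_length]
      omega
    rw [halfWeight, halfWeight, norm_inv_eq, norm_inv_eq, hnorm, toWord_inv, toWord_inv, hbcw, hcw,
      invRev_append, invRev_append, List.take_append_of_le_length hle,
      List.take_append_of_le_length hle]
  exact Prod.Lex.toLex_lt_toLex.2 (Or.inr ⟨hnorm, by simp only; omega⟩)

/-- No entry of `u` becomes smaller when it is multiplied by another signed entry. -/
def IsNielsenMinimal (u : ι → FreeGroup (Fin n)) : Prop :=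
  ∀ x y : ι × Bool, x.1 ≠ y.1 →
    nielsenMeasure (signedEntry u y) ≤ nielsenMeasure (signedEntry u x * signedEntry u y)

variable {u : ι → FreeGroup (Fin n)}

theorem IsNielsenMinimal.le_mul_right (hmin : IsNielsenMinimal u) {x y : ι × Bool}
    (hxy : x.1 ≠ y.1) :
    nielsenMeasure (signedEntry u x) ≤ nielsenMeasure (signedEntry u x * signedEntry u y) := by
  have hle := hmin (y.1, !y.2) (x.1, !x.2) hxy.symm
  rwa [signedEntry_not, signedEntry_not, ← mul_inv_rev, nielsenMeasure_inv,
    nielsenMeasure_inv] at hle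

theorem IsNielsenMinimal.gromovProd_le_right (hu : ∀ i, u i ≠ 1) (hmin : IsNielsenMinimal u)
    {x y : ι × Bool} (hxy : x.1 = y.1 → x.2 = y.2) :
    gromovProd (signedEntry u x)⁻¹ (signedEntry u y) ≤ norm (signedEntry u y) := by
  by_cases h : x.1 = y.1
  · obtain rfl : x = y := Prod.ext h (hxy h)
    exact (gromovProd_inv_self_lt (signedEntry_ne_one hu x)).le
  · have hnorm := mt nielsenMeasure_lt_of_norm_lt (hmin.le_mul_right h).not_gt
    rw [gromovProd_inv_left]
    omega

theorem IsNielsenMinimal.gromovProd_le_left (hu : ∀ i, u i ≠ 1) (hmin : IsNielsenMinimal u)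
    {x y : ι × Bool} (hxy : x.1 = y.1 → x.2 = y.2) :
    gromovProd (signedEntry u x)⁻¹ (signedEntry u y) ≤ norm (signedEntry u x) := by
  have hle := hmin.gromovProd_le_right hu (x := (y.1, !y.2)) (y := (x.1, !x.2))
    (fun h => congrArg Bool.not (hxy h.symm).symm)
  rwa [signedEntry_not, signedEntry_not, inv_inv, gromovProd_comm, norm_inv_eq] at hle

/- If the middle factor `b` of `a * b * c` cancels completely, exactly half of it cancels on either
side; replacing `c` by `b * c`, or `a⁻¹` by `b⁻¹ * a⁻¹`, then exchanges the two halves of `b`. -/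
theorem IsNielsenMinimal.isNielsenReduced (hu : ∀ i, u i ≠ 1) (hmin : IsNielsenMinimal u) :
    IsNielsenReduced u := by
  refine ⟨hu, fun x y hxy => hmin.gromovProd_le_right hu hxy, fun x y z hxy hyz => ?_⟩
  have hx := hmin.gromovProd_le_left hu hxy
  have hy := hmin.gromovProd_le_right hu hxy
  have hy' := hmin.gromovProd_le_left hu hyz
  have hz := hmin.gromovProd_le_right hu hyz
  by_contra! hle
  have hab : gromovProd (signedEntry u x)⁻¹ (signedEntry u y) = norm (signedEntry u y) := by omega
  have hbc : gromovProd (signedEntry u y)⁻¹ (signedEntry u z) = norm (signedEntry u y) := by omega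
  have hy₁ := signedEntry_ne_one hu y
  have hxy' : x.1 ≠ y.1 := fun h => by
    obtain rfl : x = y := Prod.ext h (hxy h)
    exact (gromovProd_inv_self_lt hy₁).ne hab
  have hyz' : y.1 ≠ z.1 := fun h => by
    obtain rfl : y = z := Prod.ext h (hyz h)
    exact (gromovProd_inv_self_lt hy₁).ne hbc
  have hminc := hmin y z hyz'
  have hmina := hmin (y.1, !y.2) (x.1, !x.2) hxy'.symm
  rw [signedEntry_not, signedEntry_not] at hmina
  generalize signedEntry u x = a at *
  generalize signedEntry u y = b at *
  generalize signedEntry u z = c at *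
  rcases lt_trichotomy (halfWeight b) (halfWeight b⁻¹) with hlt | heq | hgt
  · exact (nielsenMeasure_mul_lt hbc (by omega) hlt).not_ge hminc
  · obtain ⟨k, hk⟩ := exists_gromovProd_eq_two_mul b⁻¹ c
    exact hy₁ (eq_one_of_halfWeight_inv_eq ⟨k, by omega⟩ heq)
  · refine (nielsenMeasure_mul_lt (b := b⁻¹) ?_ ?_ ?_).not_ge hmina
    · rw [inv_inv, gromovProd_comm, hab, norm_inv_eq]
    · rw [norm_inv_eq, norm_inv_eq]
      omega
    · rwa [inv_inv]

end NielsenMinimal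

section NielsenGeneration

open FreeGroup

variable {ι : Type*}

theorem mulAut_ext_of {φ ψ : MulAut (FreeGroup ι)} (h : ∀ i, φ (of i) = ψ (of i)) : φ = ψ :=
  MulEquiv.toMonoidHom_injective (FreeGroup.ext_hom _ _ h)

variable [DecidableEq ι]

/-- The endomorphism `x_j ↦ x_i ^ r * x_j * x_i ^ s` of a free group, fixing the generators other
than `x_j`. -/
def nielsenHom (i j : ι) (r s : ℤ) : FreeGroup ι →* FreeGroup ι :=
  lift (Function.update of j (of i ^ r * of j * of i ^ s))

theorem nielsenHom_of_self (i j : ι) (r s : ℤ) :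
    nielsenHom i j r s (of j) = of i ^ r * of j * of i ^ s := by
  rw [nielsenHom, lift_apply_of, Function.update_self]

theorem nielsenHom_of_ne (i : ι) {j k : ι} (hkj : k ≠ j) (r s : ℤ) :
    nielsenHom i j r s (of k) = of k := by
  rw [nielsenHom, lift_apply_of, Function.update_of_ne hkj]

theorem nielsenHom_comp_neg {i j : ι} (hij : i ≠ j) (r s : ℤ) :
    (nielsenHom i j r s).comp (nielsenHom i j (-r) (-s)) = MonoidHom.id _ := by
  ext k
  rw [MonoidHom.comp_apply, MonoidHom.id_apply]
  by_cases hkj : k = j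
  · subst hkj
    rw [nielsenHom_of_self, _root_.map_mul, _root_.map_mul, map_zpow, map_zpow,
      nielsenHom_of_ne i hij,
      nielsenHom_of_self]
    group
  · rw [nielsenHom_of_ne i hkj, nielsenHom_of_ne i hkj]

/-- The Nielsen automorphism `x_j ↦ x_i ^ r * x_j * x_i ^ s`. -/
def nielsenAut {i j : ι} (hij : i ≠ j) (r s : ℤ) : MulAut (FreeGroup ι) :=
  MonoidHom.toMulEquiv (nielsenHom i j r s) (nielsenHom i j (-r) (-s))
    (by simpa only [neg_neg] using nielsenHom_comp_neg hij (-r) (-s)) (nielsenHom_comp_neg hij r s)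

theorem nielsenAut_of_self {i j : ι} (hij : i ≠ j) (r s : ℤ) :
    nielsenAut hij r s (of j) = of i ^ r * of j * of i ^ s :=
  nielsenHom_of_self i j r s

theorem nielsenAut_of_ne {i j k : ι} (hij : i ≠ j) (hkj : k ≠ j) (r s : ℤ) :
    nielsenAut hij r s (of k) = of k :=
  nielsenHom_of_ne i hkj r s

theorem finite_setOf_norm_le [Finite ι] (m : ℕ) : {g : FreeGroup ι | norm g ≤ m}.Finite := by
  have hlist := List.finite_length_le (ι × Bool) m
  exact hlist.preimage toWord_injective.injOn

/-- The Nielsen automorphisms with exponents in `{-1, 0, 1}`, and the automorphisms which map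
generators to words of length at most one (these permute the generators and their inverses). -/
def nielsenGenerators (ι : Type*) [DecidableEq ι] : Set (MulAut (FreeGroup ι)) :=
  Set.range (fun q : {p : ι × ι // p.1 ≠ p.2} × Set.Icc (-1 : ℤ) 1 × Set.Icc (-1 : ℤ) 1 =>
    nielsenAut q.1.2 q.2.1 q.2.2) ∪ {φ | ∀ k, norm (φ (of k)) ≤ 1}

theorem finite_nielsenGenerators [Finite ι] : (nielsenGenerators ι).Finite := by
  refine (Set.finite_range _).union (Set.Finite.of_finite_image
    (f := fun (φ : MulAut (FreeGroup ι)) k => φ (of k)) ?_ ?_)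
  · refine (Set.Finite.pi' fun _ => finite_setOf_norm_le 1).subset ?_
    rintro _ ⟨φ, hφ, rfl⟩
    exact hφ
  · exact fun φ _ ψ _ h => mulAut_ext_of (congrFun h)

variable {n : ℕ}

/-- The sum of the Nielsen measures of the images of the generators. -/
def totalMeasure (φ : MulAut (FreeGroup (Fin n))) : ℕ ×ₗ ℕ := ∑ k, nielsenMeasure (φ (of k))

theorem totalMeasure_mul_nielsenAut_lt {φ : MulAut (FreeGroup (Fin n))} {i j : Fin n}
    (hij : i ≠ j) {r s : ℤ}
    (hlt : nielsenMeasure (φ (nielsenAut hij r s (of j))) < nielsenMeasure (φ (of j))) :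
    totalMeasure (φ * nielsenAut hij r s) < totalMeasure φ := by
  refine Finset.sum_lt_sum (fun k _ => ?_) ⟨j, Finset.mem_univ j, hlt⟩
  by_cases hkj : k = j
  · exact hkj ▸ hlt.le
  · rw [MulAut.mul_apply, nielsenAut_of_ne hij hkj]

theorem norm_symm_of_le_one {φ : MulAut (FreeGroup (Fin n))}
    (hmin : IsNielsenMinimal fun k => φ (of k)) (k : Fin n) : norm (φ.symm (of k)) ≤ 1 := by
  have hne (k : Fin n) : φ (of k) ≠ 1 := fun h => of_ne_one k ((map_eq_one_iff φ φ.injective).1 h)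
  have hlift : lift (fun k => φ (of k)) = φ.toMonoidHom := by
    ext k
    simp
  have hle := (hmin.isNielsenReduced hne).norm_le_norm_lift (φ.symm (of k))
  rwa [hlift, MulEquiv.coe_toMonoidHom, MulEquiv.apply_symm_apply, norm_of] at hle

theorem exists_nielsenAut_measure_lt {φ : MulAut (FreeGroup (Fin n))}
    (hmin : ¬ IsNielsenMinimal fun k => φ (of k)) :
    ∃ (i j : Fin n) (hij : i ≠ j), ∃ r ∈ Set.Icc (-1 : ℤ) 1, ∃ s ∈ Set.Icc (-1 : ℤ) 1,
      nielsenMeasure (φ (nielsenAut hij r s (of j))) < nielsenMeasure (φ (of j)) := by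
  rw [IsNielsenMinimal] at hmin
  push Not at hmin
  obtain ⟨⟨i, b⟩, ⟨j, c⟩, hij : i ≠ j, hlt⟩ := hmin
  refine ⟨i, j, hij, ?_⟩
  have hφ (r s : ℤ) : φ (nielsenAut hij r s (of j)) = φ (of i) ^ r * φ (of j) * φ (of i) ^ s := by
    rw [nielsenAut_of_self, _root_.map_mul, _root_.map_mul, map_zpow, map_zpow]
  simp only [hφ]
  cases c with
  | true =>
    cases b
    · exact ⟨-1, by decide, 0, by decide, by simpa [signedEntry] using hlt⟩
    · exact ⟨1, by decide, 0, by decide, by simpa [signedEntry] using hlt⟩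
  | false =>
    rw [← nielsenMeasure_inv, ← nielsenMeasure_inv (signedEntry _ (j, false)), mul_inv_rev] at hlt
    cases b
    · exact ⟨0, by decide, 1, by decide, by simpa [signedEntry] using hlt⟩
    · exact ⟨0, by decide, -1, by decide, by simpa [signedEntry] using hlt⟩

theorem closure_nielsenGenerators : Subgroup.closure (nielsenGenerators (Fin n)) = ⊤ := by
  refine (Subgroup.eq_top_iff' _).2 fun φ => ?_
  induction hm : totalMeasure φ using WellFoundedLT.induction generalizing φ with
  | ind m ih =>
  subst hm
  by_cases hmin : IsNielsenMinimal fun k => φ (of k)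
  · exact inv_mem_iff.1 (Subgroup.subset_closure (Or.inr (norm_symm_of_le_one hmin)))
  · obtain ⟨i, j, hij, r, hr, s, hs, hlt⟩ := exists_nielsenAut_measure_lt hmin
    have hmem : nielsenAut hij r s ∈ Subgroup.closure (nielsenGenerators (Fin n)) :=
      Subgroup.subset_closure (Or.inl ⟨(⟨(i, j), hij⟩, ⟨r, hr⟩, ⟨s, hs⟩), rfl⟩)
    exact (Subgroup.mul_mem_cancel_right _ hmem).1
      (ih _ (totalMeasure_mul_nielsenAut_lt hij hlt) _ rfl)

theorem fg_mulAut_freeGroup (n : ℕ) : Group.FG (MulAut (FreeGroup (Fin n))) :=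
  Group.fg_iff.2 ⟨nielsenGenerators (Fin n), closure_nielsenGenerators, finite_nielsenGenerators⟩

end NielsenGeneration

section SpecialLinear

open Matrix

variable {ι : Type*} [Fintype ι] [DecidableEq ι]

theorem transvection_mulVec {R : Type*} [CommRing R] (i j : ι) (c : R) (v : ι → R) :
    transvection i j c *ᵥ v = v + Pi.single i (c * v j) := by
  rw [transvection, add_mulVec, one_mulVec, single_mulVec]
  rfl

theorem transvection_pow {R : Type*} [CommRing R] {i j : ι} (hij : i ≠ j) (c : R) (k : ℕ) :
    transvection i j c ^ k = transvection i j (k * c) := by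
  induction k with
  | zero => simp
  | succ k ih =>
    rw [pow_succ, ih, transvection_mul_transvection_same _ _ hij, Nat.cast_succ, add_one_mul]

theorem diag2n_eq_prod_transvection {F : Type*} [Field F] {i j : ι} (hij : i ≠ j) {a : F}
    (ha : a ≠ 0) :
    (SpecialLinearGroup.diag2n hij a ha : Matrix ι ι F) =
      transvection i j a * transvection j i (-a⁻¹) * transvection i j a *
        transvection i j (-1) * transvection j i 1 * transvection i j (-1) := by
  refine Matrix.ext_of_mulVec_single fun x => ?_
  generalize (Pi.single x 1 : ι → F) = v
  ext k
  simp only [SpecialLinearGroup.diag2n_coe, ← mulVec_mulVec, transvection_mulVec, mulVec_diagonal,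
    Pi.add_apply, Pi.single_apply, hij, hij.symm, if_true, if_false]
  split_ifs with hki hkj
  · exact absurd (hki.symm.trans hkj) hij
  all_goals
    subst_vars
    field_simp
    ring

theorem mem_of_det_eq_one [Nontrivial ι] {F : Type*} [Field F]
    {N : Submonoid (Matrix ι ι F)} (hN : ∀ i j, i ≠ j → ∀ c, transvection i j c ∈ N)
    {M : Matrix ι ι F} (hM : M.det = 1) : M ∈ N := by
  refine SpecialLinearGroup.diagonal_transvection_induction' (fun A => A.1 ∈ N) ⟨M, hM⟩ ?_ hN
    fun A B => mul_mem
  intro i j hij a ha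
  have hji := hij.symm
  rw [diag2n_eq_prod_transvection hij ha]
  exact mul_mem (mul_mem (mul_mem (mul_mem (mul_mem (hN i j hij _) (hN j i hji _)) (hN i j hij _))
    (hN i j hij _)) (hN j i hji _)) (hN i j hij _)

end SpecialLinear

section HomologyRepresentation

open Matrix

variable {ι : Type*} [DecidableEq ι]

/-- The abelianization of a free group: the vector of exponent sums of the generators. -/
def exponentSum : FreeGroup ι →* Multiplicative (ι → ℤ) :=
  FreeGroup.lift fun k => Multiplicative.ofAdd (Pi.single k 1)

/-- The matrix of the action of an endomorphism of a free group on the abelianization. -/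
def homologyMatrix (f : FreeGroup ι →* FreeGroup ι) : Matrix ι ι ℤ :=
  Matrix.of fun i j => (exponentSum (f (FreeGroup.of j))).toAdd i

theorem homologyMatrix_id : homologyMatrix (MonoidHom.id (FreeGroup ι)) = 1 := by
  ext i j
  simp [homologyMatrix, exponentSum, one_apply, Pi.single_apply]

variable [Fintype ι]

theorem homologyMatrix_mulVec (f : FreeGroup ι →* FreeGroup ι) (w : FreeGroup ι) :
    homologyMatrix f *ᵥ (exponentSum w).toAdd = (exponentSum (f w)).toAdd := by
  have hcomp : (AddMonoidHom.toMultiplicative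
      (mulVecLin (homologyMatrix f)).toAddMonoidHom).comp exponentSum = exponentSum.comp f := by
    ext k
    simp [exponentSum, homologyMatrix]
  exact congrArg Multiplicative.toAdd (DFunLike.congr_fun hcomp w)

theorem homologyMatrix_comp (f g : FreeGroup ι →* FreeGroup ι) :
    homologyMatrix (f.comp g) = homologyMatrix f * homologyMatrix g := by
  ext i j
  exact (congrFun (homologyMatrix_mulVec f (g (FreeGroup.of j))) i).symm

/-- The action of automorphisms of a free group on the abelianization. -/
def homologyRep : MulAut (FreeGroup ι) →* Matrix ι ι ℤ where
  toFun φ := homologyMatrix φ.toMonoidHom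
  map_one' := homologyMatrix_id
  map_mul' φ ψ := homologyMatrix_comp φ.toMonoidHom ψ.toMonoidHom

theorem homologyRep_conj (g : FreeGroup ι) : homologyRep (MulAut.conj g) = 1 := by
  ext i j
  simp [homologyRep, homologyMatrix, exponentSum, one_apply, Pi.single_apply]

/-- The action of outer automorphisms of a free group on the abelianization. -/
def outerHomologyRep :
    MulAut (FreeGroup ι) ⧸ (MulAut.conj : FreeGroup ι →* _).range →* Matrix ι ι ℤ :=
  QuotientGroup.lift _ homologyRep (by
    rintro _ ⟨g, rfl⟩
    exact homologyRep_conj g)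

theorem homologyRep_nielsenAut {i j : ι} (hij : i ≠ j) :
    homologyRep (nielsenAut hij 1 0) = transvection i j 1 := by
  ext a b
  change (exponentSum (nielsenAut hij 1 0 (FreeGroup.of b))).toAdd a = _
  by_cases hb : b = j
  · subst hb
    simp [nielsenAut_of_self, exponentSum, transvection, one_apply, Pi.single_apply, single_apply,
      eq_comm, add_comm]
  · simp [nielsenAut_of_ne hij hb, exponentSum, transvection, one_apply, Pi.single_apply,
      Ne.symm hb]

theorem exists_outerHomologyRep_map_eq [Nontrivial ι] (p : ℕ) [Fact p.Prime]
    {M : Matrix ι ι (ZMod p)} (hM : M.det = 1) :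
    ∃ g, (outerHomologyRep g).map (Int.castRingHom (ZMod p)) = M := by
  let f := ((Int.castRingHom (ZMod p)).mapMatrix (m := ι)).toMonoidHom.comp outerHomologyRep
  refine mem_of_det_eq_one (N := MonoidHom.mrange f) (fun i j hij c => ?_) hM
  refine ⟨QuotientGroup.mk (nielsenAut hij 1 0 ^ c.val), ?_⟩
  change (homologyRep (nielsenAut hij 1 0 ^ c.val)).map (Int.castRingHom (ZMod p)) = _
  rw [map_pow, homologyRep_nielsenAut, transvection_pow hij]
  ext a b
  simp [transvection, one_apply, single_apply]

end HomologyRepresentation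

section PolyBounded

open Matrix

variable {Ω : Type*} {Λ : Ω → ℝ}

/-- `f` is bounded by a power of `Λ`, uniformly over the family. The base `2 + |Λ|` makes this
notion stable under sums and products without any assumption on `Λ`. -/
def PolyBounded (Λ : Ω → ℝ) {E : Type*} [Norm E] (f : Ω → E) : Prop :=
  ∃ c : ℕ, ∀ ω, ‖f ω‖ ≤ (2 + |Λ ω|) ^ c

theorem PolyBounded.exists_forall_le_pow {E : Type*} [Norm E] {f : Ω → E} (hf : PolyBounded Λ f)
    (hΛ : ∀ ω, 2 ≤ Λ ω) : ∃ c : ℕ, ∀ ω, ‖f ω‖ ≤ Λ ω ^ c := by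
  obtain ⟨c, hc⟩ := hf
  refine ⟨2 * c, fun ω => (hc ω).trans ?_⟩
  rw [pow_mul]
  have := hΛ ω
  gcongr
  rw [abs_of_nonneg (by linarith)]
  nlinarith

theorem PolyBounded.mono {E E' : Type*} [Norm E] [Norm E'] {f : Ω → E} {g : Ω → E'}
    (hg : PolyBounded Λ g) (h : ∀ ω, ‖f ω‖ ≤ ‖g ω‖) : PolyBounded Λ f := by
  obtain ⟨c, hc⟩ := hg
  exact ⟨c, fun ω => (h ω).trans (hc ω)⟩

theorem PolyBounded.of_le {E : Type*} [Norm E] {f : Ω → E} {g : Ω → ℝ} (hg : PolyBounded Λ g)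
    (h : ∀ ω, ‖f ω‖ ≤ g ω) : PolyBounded Λ f :=
  hg.mono fun ω => (h ω).trans (le_abs_self _)

theorem PolyBounded.self : PolyBounded Λ Λ :=
  ⟨1, fun ω => by
    rw [pow_one, Real.norm_eq_abs]
    linarith⟩

theorem PolyBounded.const {E : Type*} [Norm E] (x : E) : PolyBounded Λ fun _ => x := by
  obtain ⟨c, hc⟩ := pow_unbounded_of_one_lt ‖x‖ one_lt_two
  refine ⟨c, fun ω => hc.le.trans ?_⟩
  gcongr
  exact le_add_of_nonneg_right (abs_nonneg _)

theorem PolyBounded.norm {E : Type*} [SeminormedAddCommGroup E] {f : Ω → E}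
    (hf : PolyBounded Λ f) : PolyBounded Λ fun ω => ‖f ω‖ :=
  hf.mono fun _ => (norm_norm _).le

theorem PolyBounded.add {E : Type*} [SeminormedAddCommGroup E] {f g : Ω → E}
    (hf : PolyBounded Λ f) (hg : PolyBounded Λ g) : PolyBounded Λ fun ω => f ω + g ω := by
  obtain ⟨c, hc⟩ := hf
  obtain ⟨d, hd⟩ := hg
  refine ⟨c + d + 1, fun ω => ?_⟩
  have hbase : 2 ≤ 2 + |Λ ω| := le_add_of_nonneg_right (abs_nonneg _)
  calc ‖f ω + g ω‖ ≤ (2 + |Λ ω|) ^ c + (2 + |Λ ω|) ^ d :=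
        (norm_add_le _ _).trans (add_le_add (hc ω) (hd ω))
    _ ≤ (2 + |Λ ω|) ^ (c + d) + (2 + |Λ ω|) ^ (c + d) := by
        gcongr <;> linarith
    _ = (2 + |Λ ω|) ^ (c + d) * 2 := (mul_two _).symm
    _ ≤ (2 + |Λ ω|) ^ (c + d + 1) := by rw [pow_succ]; gcongr

theorem PolyBounded.mul {E : Type*} [SeminormedRing E] {f g : Ω → E} (hf : PolyBounded Λ f)
    (hg : PolyBounded Λ g) : PolyBounded Λ fun ω => f ω * g ω := by
  obtain ⟨c, hc⟩ := hf
  obtain ⟨d, hd⟩ := hg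
  refine ⟨c + d, fun ω => (norm_mul_le _ _).trans ?_⟩
  rw [pow_add]
  exact mul_le_mul (hc ω) (hd ω) (norm_nonneg _) (by positivity)

theorem PolyBounded.smul {𝕜 E : Type*} [NormedField 𝕜] [SeminormedAddCommGroup E]
    [NormedSpace 𝕜 E] {f : Ω → 𝕜} {g : Ω → E} (hf : PolyBounded Λ f) (hg : PolyBounded Λ g) :
    PolyBounded Λ fun ω => f ω • g ω :=
  (hf.norm.mul hg.norm).of_le fun _ => norm_smul_le _ _

theorem PolyBounded.sum {E κ : Type*} [SeminormedAddCommGroup E] (s : Finset κ)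
    {f : κ → Ω → E} (hf : ∀ k ∈ s, PolyBounded Λ (f k)) :
    PolyBounded Λ fun ω => ∑ k ∈ s, f k ω := by
  induction s using Finset.cons_induction with
  | empty => simpa using PolyBounded.const (0 : E)
  | cons a s ha ih =>
    simp only [Finset.sum_cons]
    exact (hf a (Finset.mem_cons_self a s)).add (ih fun k hk => hf k (Finset.mem_cons_of_mem hk))

theorem PolyBounded.prod {E κ : Type*} [SeminormedCommRing E] (s : Finset κ) {f : κ → Ω → E}
    (hf : ∀ k ∈ s, PolyBounded Λ (f k)) : PolyBounded Λ fun ω => ∏ k ∈ s, f k ω := by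
  induction s using Finset.cons_induction with
  | empty => simpa using PolyBounded.const (1 : E)
  | cons a s ha ih =>
    simp only [Finset.prod_cons]
    exact (hf a (Finset.mem_cons_self a s)).mul (ih fun k hk => hf k (Finset.mem_cons_of_mem hk))

theorem PolyBounded.pow {E : Type*} [SeminormedRing E] {f : Ω → E} (hf : PolyBounded Λ f) (k : ℕ) :
    PolyBounded Λ fun ω => f ω ^ k := by
  induction k with
  | zero => simpa using PolyBounded.const (1 : E)
  | succ k ih => simpa only [pow_succ] using ih.mul hf

variable {𝕜 : Type*} [NormedField 𝕜]

theorem PolyBounded.inv_of_one_le_norm {f : Ω → 𝕜} (hf : ∀ ω, 1 ≤ ‖f ω‖) :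
    PolyBounded Λ fun ω => (f ω)⁻¹ :=
  (PolyBounded.const (1 : ℝ)).of_le fun ω => by
    rw [norm_inv]
    exact inv_le_one_of_one_le₀ (hf ω)

theorem PolyBounded.inv_of_mul_left {f g : Ω → 𝕜} (hg : PolyBounded Λ g)
    (hfg : PolyBounded Λ fun ω => (f ω * g ω)⁻¹) (hg0 : ∀ ω, g ω ≠ 0) :
    PolyBounded Λ fun ω => (f ω)⁻¹ :=
  (hg.mul hfg).mono fun ω => by
    rw [mul_inv, mul_left_comm, mul_inv_cancel₀ (hg0 ω), mul_one]

theorem PolyBounded.inv_of_prod {κ : Type*} {s : Finset κ} {f : κ → Ω → 𝕜}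
    (hf : ∀ k ∈ s, PolyBounded Λ (f k)) (hinv : PolyBounded Λ fun ω => (∏ k ∈ s, f k ω)⁻¹)
    (hs : ∀ ω, ∏ k ∈ s, f k ω ≠ 0) {k : κ} (hk : k ∈ s) : PolyBounded Λ fun ω => (f k ω)⁻¹ := by
  classical
  simp only [← Finset.mul_prod_erase s (fun j => f j _) hk] at hinv hs
  exact .inv_of_mul_left (.prod _ fun j hj => hf j (Finset.mem_of_mem_erase hj)) hinv
    fun ω => right_ne_zero_of_mul (hs ω)

theorem PolyBounded.det {m : Type*} [Fintype m] [DecidableEq m] {M : Ω → Matrix m m 𝕜}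
    (h : ∀ i j, PolyBounded Λ fun ω => M ω i j) : PolyBounded Λ fun ω => (M ω).det := by
  simp only [det_apply']
  exact .sum _ fun σ _ => (PolyBounded.const _).mul (.prod _ fun i _ => h _ _)

theorem PolyBounded.matrix_inv {m : Type*} [Fintype m] [DecidableEq m] {M : Ω → Matrix m m 𝕜}
    (h : ∀ i j, PolyBounded Λ fun ω => M ω i j) (hdet : PolyBounded Λ fun ω => (M ω).det⁻¹)
    (i j : m) : PolyBounded Λ fun ω => (M ω)⁻¹ i j := by
  simp only [inv_def, Ring.inverse_eq_inv', Matrix.smul_apply, smul_eq_mul,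
    adjugate_apply]
  refine hdet.mul (.det fun a b => ?_)
  by_cases haj : a = j
  · subst haj
    simpa only [updateRow_self] using PolyBounded.const _
  · simpa only [updateRow_ne haj] using h a b

attribute [local instance] Matrix.linftyOpNormedAddCommGroup

theorem norm_entry_le_linfty_opNorm {m n : Type*} [Fintype m] [Fintype n] (M : Matrix m n 𝕜)
    (i : m) (j : n) : ‖M i j‖ ≤ ‖M‖ := by
  rw [linfty_opNorm_def]
  exact_mod_cast (Finset.single_le_sum_of_canonicallyOrdered (f := fun j => ‖M i j‖₊)
    (Finset.mem_univ j)).trans (Finset.le_sup (f := fun i => ∑ j, ‖M i j‖₊) (Finset.mem_univ i))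

theorem linfty_opNorm_le_sum_norm_entry {m n : Type*} [Fintype m] [Fintype n]
    (M : Matrix m n 𝕜) : ‖M‖ ≤ ∑ i, ∑ j, ‖M i j‖ := by
  have hsup : (Finset.univ.sup fun i => ∑ j, ‖M i j‖₊) ≤ ∑ i, ∑ j, ‖M i j‖₊ :=
    Finset.sup_le fun i _ => Finset.single_le_sum_of_canonicallyOrdered
      (f := fun i => ∑ j, ‖M i j‖₊) (Finset.mem_univ i)
  rw [linfty_opNorm_def]
  simpa using NNReal.coe_le_coe.2 hsup

theorem PolyBounded.entry {m n : Type*} [Fintype m] [Fintype n] {M : Ω → Matrix m n 𝕜}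
    (h : PolyBounded Λ M) (i : m) (j : n) : PolyBounded Λ fun ω => M ω i j :=
  h.mono fun _ => norm_entry_le_linfty_opNorm _ i j

theorem PolyBounded.of_entry {m n : Type*} [Fintype m] [Fintype n] {M : Ω → Matrix m n 𝕜}
    (h : ∀ i j, PolyBounded Λ fun ω => M ω i j) : PolyBounded Λ M :=
  (PolyBounded.sum _ fun i _ => .sum _ fun j _ => (h i j).norm).of_le fun ω =>
    linfty_opNorm_le_sum_norm_entry (M ω)

end PolyBounded

section Hankel

open Matrix

/-- The Hankel determinant of order `N` of a sequence. -/
def hankelDet {R : Type*} [CommRing R] (N : ℕ) (c : ℕ → R) : R :=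
  (Matrix.of fun k l : Fin N => c (k + l)).det

theorem map_hankelDet {R S : Type*} [CommRing R] [CommRing S] (f : R →+* S) (N : ℕ) (c : ℕ → R) :
    f (hankelDet N c) = hankelDet N fun k => f (c k) := by
  rw [hankelDet, RingHom.map_det]
  rfl

variable {κ : Type*} [Fintype κ] {N : ℕ}

theorem hankelDet_powerSum {R : Type*} [CommRing R] (e : κ ≃ Fin N) (μ m : κ → R) :
    hankelDet N (fun k => ∑ x, μ x ^ k * m x) =
      (vandermonde (μ ∘ e.symm)).det ^ 2 * ∏ x, m x := by
  have hmul : (Matrix.of fun k l : Fin N => ∑ x, μ x ^ (k + l : ℕ) * m x) =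
      (vandermonde (μ ∘ e.symm))ᵀ * diagonal (m ∘ e.symm) * vandermonde (μ ∘ e.symm) := by
    ext k l
    rw [mul_apply]
    simp only [mul_diagonal, transpose_apply, vandermonde_apply, of_apply, Function.comp_apply]
    rw [← Equiv.sum_comp e.symm]
    exact Finset.sum_congr rfl fun i _ => by ring
  simp only [hankelDet, hmul, det_mul, det_transpose, det_diagonal, Function.comp_apply]
  rw [Equiv.prod_comp e.symm m]
  ring

theorem hankelDet_powerSum_ne_zero_iff {R : Type*} [Field R] (e : κ ≃ Fin N) (μ m : κ → R) :
    hankelDet N (fun k => ∑ x, μ x ^ k * m x) ≠ 0 ↔ Function.Injective μ ∧ ∀ x, m x ≠ 0 := by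
  rw [hankelDet_powerSum e, mul_ne_zero_iff, pow_ne_zero_iff two_ne_zero,
    det_vandermonde_ne_zero_iff, Finset.prod_ne_zero_iff, e.symm.injective_comp]
  simp only [Finset.mem_univ, true_imp_iff]

theorem PolyBounded.inv_weight_of_hankelDet {Ω 𝕜 : Type*} {Λ : Ω → ℝ} [NormedField 𝕜]
    {μ m : κ → Ω → 𝕜} (e : κ ≃ Fin N) (hμ : ∀ x, PolyBounded Λ (μ x))
    (hm : ∀ x, PolyBounded Λ (m x))
    (hone : ∀ ω, 1 ≤ ‖hankelDet N fun k => ∑ x, μ x ω ^ k * m x ω‖) (x : κ) :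
    PolyBounded Λ fun ω => (m x ω)⁻¹ := by
  have hne (ω : Ω) := norm_ne_zero_iff.1 (zero_lt_one.trans_le (hone ω)).ne'
  have hinv := PolyBounded.inv_of_one_le_norm (Λ := Λ) hone
  simp only [hankelDet_powerSum e, mul_comm _ (∏ _, _)] at hinv hne
  refine .inv_of_prod (fun y _ => hm y) (.inv_of_mul_left (.pow ?_ 2) hinv fun ω =>
    right_ne_zero_of_mul (hne ω)) (fun ω => left_ne_zero_of_mul (hne ω)) (Finset.mem_univ x)
  exact .det fun i j => (hμ _).pow j

end Hankel

section PrincipalMinors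

open Matrix

variable {ι K : Type*} [Fintype ι] [DecidableEq ι] [CommRing K]

/-- The minor of `s` on the rows and columns in `I`. -/
def principalMinor (s : Matrix ι ι K) (I : Finset ι) : K :=
  (s.submatrix (Subtype.val : I → ι) (Subtype.val : I → ι)).det

theorem map_principalMinor {K' : Type*} [CommRing K'] (f : K →+* K') (s : Matrix ι ι K)
    (I : Finset ι) : f (principalMinor s I) = principalMinor (f.mapMatrix s) I :=
  RingHom.map_det f _

/-- The projection onto the coordinates in `I`, along the others. -/
def coordProj (K : Type*) [Zero K] [One K] (I : Finset ι) : Matrix ι ι K :=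
  diagonal fun i => if i ∈ I then 1 else 0

theorem coordProj_mul_self (I : Finset ι) : coordProj K I * coordProj K I = coordProj K I := by
  rw [coordProj, diagonal_mul_diagonal]
  congr 1 with i
  split_ifs <;> simp

theorem one_sub_coordProj (I : Finset ι) : 1 - coordProj K I = coordProj K Iᶜ := by
  rw [coordProj, coordProj, ← diagonal_one, diagonal_sub]
  congr 1 with i
  by_cases hi : i ∈ I <;> simp [hi]

theorem det_corner_eq_principalMinor (s : Matrix ι ι K) (I : Finset ι) :
    (coordProj K I * s * coordProj K I + (1 - coordProj K I)).det = principalMinor s I := by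
  have hrows : coordProj K I * s * coordProj K I + (1 - coordProj K I) =
      of (I.piecewise (s * coordProj K I).row (1 : Matrix ι ι K).row) := by
    ext i j
    rw [one_sub_coordProj, Matrix.mul_assoc]
    by_cases hi : i ∈ I <;> simp [coordProj, hi, diagonal_apply, one_apply]
  have hcols : (s * coordProj K I).submatrix (Subtype.val : I → ι) (Subtype.val : I → ι) =
      s.submatrix Subtype.val Subtype.val := by
    ext i j
    simp [coordProj, mul_diagonal]
  rw [hrows, det_piecewise_one_eq_submatrix_det, hcols, principalMinor]

theorem det_one_add_diagonal_mul (l : ι → K) (s : Matrix ι ι K) :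
    (1 + diagonal l * s).det = ∑ I : Finset ι, (∏ j ∈ I, l j) * principalMinor s I := by
  have hrows : (1 + diagonal l * s).det =
      detRowAlternating ((fun i => l i • s.row i) + (1 : Matrix ι ι K).row) := by
    refine congrArg det (Matrix.ext fun i j => ?_)
    rw [Matrix.add_apply, diagonal_mul, add_comm]
    rfl
  rw [hrows, AlternatingMap.map_add_univ]
  refine Finset.sum_congr rfl fun I _ => ?_
  have hsmul : (I.piecewise (fun i => l i • s.row i) (1 : Matrix ι ι K).row) =
      fun i => (if i ∈ I then l i else 1) • I.piecewise s.row (1 : Matrix ι ι K).row i := by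
    ext i j
    by_cases hi : i ∈ I <;> simp [hi]
  rw [hsmul, AlternatingMap.map_smul_univ, Finset.prod_ite_mem, Finset.univ_inter, smul_eq_mul,
    principalMinor, ← det_piecewise_one_eq_submatrix_det]
  rfl

end PrincipalMinors

section GenericPair

open Matrix

variable {n : ℕ} {K : Type*} [CommRing K]

/-- The power sums of the eigenvalues of `A`. -/
def traceSeq (A : Matrix (Fin n) (Fin n) K) (k : ℕ) : K := (A ^ k).trace

/-- For `A` diagonal, a combination of the `k`-th powers of the products of eigenvalues of `A` over
sets of indices, weighted by the principal minors of `s`. Rescaling `A` separates sets of different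
sizes; without it, the empty set and the whole set would give the same product when
`det A = 1`. -/
def minorSeq (A s : Matrix (Fin n) (Fin n) K) (k : ℕ) : K :=
  (1 + ((2 ^ (2 ^ n - 1) : K) • A) ^ k * s).det

/-- For `A = diagonal l`, a combination of the `k`-th powers of `l i * l j ^ (2 ^ n)`, weighted by
the products `s i j * s j i`. The exponent `2 ^ n` tells `(i, j)` and `(j, i)` apart. -/
def offDiagSeq (A s : Matrix (Fin n) (Fin n) K) (k : ℕ) : K :=
  (A ^ k * s * A ^ (2 ^ n * k) * s).trace

/-- The polynomial invariants of the pair `(A, s)` whose nonvanishing makes `A` diagonalizable with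
distinct eigenvalues and makes the principal minors and the off-diagonal products of `s`, in an
eigenbasis of `A`, nonzero. -/
structure IsGeneric (A s : Matrix (Fin n) (Fin n) K) : Prop where
  trace : hankelDet n (traceSeq A) ≠ 0
  minor : hankelDet (2 ^ n) (minorSeq A s) ≠ 0
  offDiag : hankelDet (n ^ 2) (offDiagSeq A s) ≠ 0

section Map

variable {K' : Type*} [CommRing K'] (f : K →+* K') (A s : Matrix (Fin n) (Fin n) K) (k : ℕ)

theorem map_traceSeq : f (traceSeq A k) = traceSeq (f.mapMatrix A) k := by
  rw [traceSeq, traceSeq, ← _root_.map_pow]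
  exact AddMonoidHom.map_trace f _

theorem map_minorSeq : f (minorSeq A s k) = minorSeq (f.mapMatrix A) (f.mapMatrix s) k := by
  have hsmul : f.mapMatrix ((2 ^ (2 ^ n - 1) : K) • A) =
      (2 ^ (2 ^ n - 1) : K') • f.mapMatrix A := by
    ext i j
    simp [map_ofNat f 2]
  rw [minorSeq, minorSeq, ← hsmul, RingHom.map_det, _root_.map_add, _root_.map_one,
    _root_.map_mul, _root_.map_pow]

theorem map_offDiagSeq : f (offDiagSeq A s k) = offDiagSeq (f.mapMatrix A) (f.mapMatrix s) k := by
  rw [offDiagSeq, offDiagSeq]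
  simp only [← _root_.map_pow, ← _root_.map_mul]
  exact AddMonoidHom.map_trace f _

variable {A s} in
theorem IsGeneric.of_map (h : IsGeneric (f.mapMatrix A) (f.mapMatrix s)) : IsGeneric A s := by
  refine ⟨ne_zero_of_map (f := f) ?_, ne_zero_of_map (f := f) ?_, ne_zero_of_map (f := f) ?_⟩ <;>
    rw [map_hankelDet]
  · simpa only [map_traceSeq] using h.trace
  · simpa only [map_minorSeq] using h.minor
  · simpa only [map_offDiagSeq] using h.offDiag

end Map

section Conj

variable (g : (Matrix (Fin n) (Fin n) K)ˣ) (A s : Matrix (Fin n) (Fin n) K)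

theorem traceSeq_units_conj : traceSeq (g.val * A * g⁻¹.val) =
    traceSeq A := by
  funext k
  rw [traceSeq, Units.conj_pow, trace_units_conj, traceSeq]

theorem minorSeq_units_conj :
    minorSeq (g.val * A * g⁻¹.val)
      (g.val * s * g⁻¹.val) = minorSeq A s := by
  ext k
  have hconj (B : Matrix (Fin n) (Fin n) K) :
      1 + (g.val * B * g⁻¹.val) *
        (g.val * s * g⁻¹.val) =
      g.val * (1 + B * s) * g⁻¹.val := by
    simp only [mul_add, add_mul, mul_one, Units.mul_inv, mul_assoc, Units.inv_mul_cancel_left]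
  rw [minorSeq, ← Matrix.smul_mul, ← Matrix.mul_smul, Units.conj_pow, hconj, det_units_conj,
    minorSeq]

theorem offDiagSeq_units_conj :
    offDiagSeq (g.val * A * g⁻¹.val) (g.val * s * g⁻¹.val) = offDiagSeq A s := by
  funext k
  rw [offDiagSeq, offDiagSeq, Units.conj_pow, Units.conj_pow]
  conv_rhs => rw [← trace_units_conj g]
  simp only [mul_assoc, Units.inv_mul_cancel_left]

theorem isGeneric_units_conj_iff :
    IsGeneric (g.val * A * g⁻¹.val) (g.val * s * g⁻¹.val) ↔ IsGeneric A s := by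
  have htrace := traceSeq_units_conj g A
  have hminor := minorSeq_units_conj g A s
  have hoffDiag := offDiagSeq_units_conj g A s
  exact ⟨fun h => ⟨htrace ▸ h.trace, hminor ▸ h.minor, hoffDiag ▸ h.offDiag⟩,
    fun h => ⟨htrace ▸ h.trace, hminor ▸ h.minor, hoffDiag ▸ h.offDiag⟩⟩

end Conj

section Diagonal

variable (l : Fin n → K) (s : Matrix (Fin n) (Fin n) K)

theorem traceSeq_diagonal : traceSeq (diagonal l) = fun k => ∑ j, l j ^ k * 1 := by
  ext k
  simp only [traceSeq, diagonal_pow, trace_diagonal, Pi.pow_apply, mul_one]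

theorem minorSeq_diagonal : minorSeq (diagonal l) s = fun k =>
    ∑ I : Finset (Fin n), (∏ j ∈ I, 2 ^ (2 ^ n - 1) * l j) ^ k * principalMinor s I := by
  ext k
  simp only [minorSeq, ← diagonal_smul, diagonal_pow, det_one_add_diagonal_mul, Pi.pow_apply,
    Pi.smul_apply, smul_eq_mul, Finset.prod_pow]

theorem offDiagSeq_diagonal : offDiagSeq (diagonal l) s = fun k =>
    ∑ t : Fin n × Fin n, (l t.1 * l t.2 ^ 2 ^ n) ^ k * (s t.1 t.2 * s t.2 t.1) := by
  ext k
  rw [offDiagSeq, diagonal_pow, diagonal_pow, trace, Fintype.sum_prod_type]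
  refine Finset.sum_congr rfl fun i _ => ?_
  rw [diag_apply, Matrix.mul_apply]
  refine Finset.sum_congr rfl fun j _ => ?_
  rw [mul_diagonal, diagonal_mul, Pi.pow_apply, Pi.pow_apply]
  ring

end Diagonal

theorem isGeneric_diagonal_iff {F : Type*} [Field F] {l : Fin n → F}
    {s : Matrix (Fin n) (Fin n) F} : IsGeneric (diagonal l) s ↔
      Function.Injective l ∧
      (Function.Injective (fun I : Finset (Fin n) => ∏ j ∈ I, 2 ^ (2 ^ n - 1) * l j) ∧
        ∀ I, principalMinor s I ≠ 0) ∧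
      Function.Injective (fun t : Fin n × Fin n => l t.1 * l t.2 ^ 2 ^ n) ∧
        ∀ t : Fin n × Fin n, s t.1 t.2 * s t.2 t.1 ≠ 0 := by
  have htrace : hankelDet n (traceSeq (diagonal l)) ≠ 0 ↔ Function.Injective l := by
    rw [traceSeq_diagonal, hankelDet_powerSum_ne_zero_iff (Equiv.refl (Fin n))]
    simp
  rw [← htrace, ← hankelDet_powerSum_ne_zero_iff (N := 2 ^ n) (Fintype.equivFinOfCardEq (by simp)),
    ← hankelDet_powerSum_ne_zero_iff (N := n ^ 2) (Fintype.equivFinOfCardEq (by simp [sq])),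
    ← minorSeq_diagonal, ← offDiagSeq_diagonal]
  exact ⟨fun h => ⟨h.trace, h.minor, h.offDiag⟩, fun ⟨h₁, h₂, h₃⟩ => ⟨h₁, h₂, h₃⟩⟩

end GenericPair

section TraceGram

open Matrix

variable {ι κ K : Type*} [Fintype ι] [CommRing K]

/-- The Gram matrix of the trace form on the family `u` of matrices. -/
def traceGram (u : κ → Matrix ι ι K) : Matrix κ κ K :=
  of fun i j => (u i * u j).trace

theorem map_traceGram {K' : Type*} [CommRing K'] [DecidableEq ι] [Fintype κ] [DecidableEq κ]
    (f : K →+* K') (u : κ → Matrix ι ι K) :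
    f.mapMatrix (traceGram u) = traceGram fun i => f.mapMatrix (u i) := by
  ext i j
  simp only [traceGram, RingHom.mapMatrix_apply, map_apply, of_apply, ← Matrix.map_mul]
  exact AddMonoidHom.map_trace f _

variable [Fintype κ]

theorem traceGram_mulVec (u : κ → Matrix ι ι K) (v : κ → K) (i : κ) :
    (traceGram u *ᵥ v) i = (u i * ∑ j, v j • u j).trace := by
  simp only [traceGram, mulVec, dotProduct, of_apply, Finset.mul_sum, trace_sum, Matrix.mul_smul,
    trace_smul, smul_eq_mul, mul_comm]

variable [DecidableEq κ]

theorem linearIndependent_of_det_traceGram_ne_zero [IsDomain K] {u : κ → Matrix ι ι K}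
    (hu : (traceGram u).det ≠ 0) : LinearIndependent K u := by
  refine Fintype.linearIndependent_iff.2 fun v hv => congrFun (eq_zero_of_mulVec_eq_zero hu ?_)
  ext i
  rw [traceGram_mulVec, hv, Matrix.mul_zero, trace_zero, Pi.zero_apply]

theorem det_traceGram_basis_ne_zero [IsDomain K]
    (b : Module.Basis κ K (Matrix ι ι K)) : (traceGram b).det ≠ 0 := by
  intro hdet
  obtain ⟨v, hv, hker⟩ := exists_mulVec_eq_zero_iff.2 hdet
  have hortho (y : Matrix ι ι K) : (y * ∑ j, v j • b j).trace = 0 := by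
    rw [← b.sum_repr y, Finset.sum_mul, trace_sum]
    refine Finset.sum_eq_zero fun i _ => ?_
    rw [Matrix.smul_mul, trace_smul, ← traceGram_mulVec, hker, Pi.zero_apply, smul_zero]
  have hzero : ∑ j, v j • b j = 0 :=
    ext_iff_trace_mul_left.2 fun y => by rw [hortho, Matrix.mul_zero, trace_zero]
  exact hv (funext (Fintype.linearIndependent_iff.1 b.linearIndependent v hzero))

end TraceGram

section ConjugatesSpan

open Matrix

theorem units_conj_mem_span_conjugatesOf {K R : Type*} [CommSemiring K] [Semiring R] [Algebra K R]
    {a x : R} (g : Rˣ) (hx : x ∈ Submodule.span K (conjugatesOf a)) :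
    g.val * x * g⁻¹.val ∈ Submodule.span K (conjugatesOf a) := by
  induction hx using Submodule.span_induction with
  | mem x hx => exact Submodule.subset_span (IsConj.trans hx ⟨g, by simp [SemiconjBy, mul_assoc]⟩)
  | zero => simp
  | add x y _ _ hx hy => simpa only [mul_add, add_mul] using add_mem hx hy
  | smul c x _ hx =>
    simpa only [mul_smul_comm, smul_mul_assoc] using Submodule.smul_mem _ c hx

variable {ι K : Type*} [Fintype ι] [DecidableEq ι]

theorem transvection_conj_mem_span_conjugatesOf [CommRing K] {a x : Matrix ι ι K} {i j : ι}
    (hij : i ≠ j) (hx : x ∈ Submodule.span K (conjugatesOf a)) :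
    transvection i j 1 * x * transvection i j (-1) ∈ Submodule.span K (conjugatesOf a) :=
  units_conj_mem_span_conjugatesOf
    ⟨transvection i j 1, transvection i j (-1), by simp [transvection_mul_transvection_same, hij],
      by simp [transvection_mul_transvection_same, hij]⟩ hx

theorem transvection_conj [CommRing K] (x : Matrix ι ι K) (i j : ι) :
    transvection i j 1 * x * transvection i j (-1) =
      x + single i j 1 * x - x * single i j 1 - single i j 1 * x * single i j 1 := by
  have hneg : single i j (-1 : K) = -single i j 1 := (singleAddMonoidHom (α := K) i j).map_neg 1
  rw [transvection, transvection, hneg]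
  noncomm_ring

variable [Field K] {d : ι → K}

theorem single_mem_span_conjugatesOf_diagonal (hd : Function.Injective d) {i j : ι} (hij : i ≠ j) :
    single i j 1 ∈ Submodule.span K (conjugatesOf (diagonal d)) := by
  have hdiag : diagonal d ∈ Submodule.span K (conjugatesOf (diagonal d)) :=
    Submodule.subset_span mem_conjugatesOf_self
  have hconj : transvection i j 1 * diagonal d * transvection i j (-1) =
      diagonal d + (d j - d i) • single i j 1 := by
    ext x y
    rw [transvection_conj]
    simp only [single_apply, diagonal_apply, mul_diagonal, diagonal_mul, add_sub_assoc,
      single_mul_mul_single, hij.symm, Matrix.add_apply, Matrix.sub_apply, Matrix.smul_apply]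
    aesop
  have hmem := transvection_conj_mem_span_conjugatesOf hij hdiag
  rw [hconj, Submodule.add_mem_iff_right _ hdiag] at hmem
  exact (Submodule.smul_mem_iff _ (sub_ne_zero.2 (hd.ne hij.symm))).1 hmem

theorem single_sub_single_mem_span_conjugatesOf_diagonal (hd : Function.Injective d) (i j : ι) :
    single j j 1 - single i i 1 ∈ Submodule.span K (conjugatesOf (diagonal d)) := by
  obtain rfl | hij := eq_or_ne i j
  · simp
  have hsingle := single_mem_span_conjugatesOf_diagonal (K := K) hd hij
  have hconj : transvection j i 1 * single i j 1 * transvection j i (-1) =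
      single i j 1 + (single j j (1 : K) - single i i 1) - single j i 1 := by
    rw [transvection_conj]
    simp [add_sub_assoc]
  have hmem := transvection_conj_mem_span_conjugatesOf hij.symm hsingle
  rwa [hconj, Submodule.sub_mem_iff_left _ (single_mem_span_conjugatesOf_diagonal hd hij.symm),
    Submodule.add_mem_iff_right _ hsingle] at hmem

theorem span_conjugatesOf_diagonal (hd : Function.Injective d) (hsum : ∑ i, d i ≠ 0) :
    Submodule.span K (conjugatesOf (diagonal d)) = ⊤ := by
  have hdiag (i : ι) : single i i 1 ∈ Submodule.span K (conjugatesOf (diagonal d)) := by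
    have hdecomp : (∑ j, d j) • single i i 1 =
        diagonal d - ∑ j, d j • (single j j (1 : K) - single i i 1) := by
      rw [Finset.sum_smul]
      simp only [smul_sub, Finset.sum_sub_distrib, smul_single, smul_eq_mul, mul_one,
        sum_single_eq_diagonal, sub_sub_cancel]
    rw [← Submodule.smul_mem_iff _ hsum, hdecomp]
    exact sub_mem (Submodule.subset_span mem_conjugatesOf_self) (Submodule.sum_mem _ fun j _ =>
      Submodule.smul_mem _ _ (single_sub_single_mem_span_conjugatesOf_diagonal hd i j))
  refine eq_top_iff.2 fun M _ => ?_
  rw [matrix_eq_sum_single M]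
  refine Submodule.sum_mem _ fun i _ => Submodule.sum_mem _ fun j _ => ?_
  rw [← mul_one (M i j), ← smul_eq_mul, ← smul_single]
  obtain rfl | hij := eq_or_ne i j
  · exact Submodule.smul_mem _ _ (hdiag i)
  · exact Submodule.smul_mem _ _ (single_mem_span_conjugatesOf_diagonal hd hij)

theorem exists_basis_units_conj_diagonal (hd : Function.Injective d) (hsum : ∑ i, d i ≠ 0) :
    ∃ (g : ι × ι → (Matrix ι ι K)ˣ) (b : Module.Basis (ι × ι) K (Matrix ι ι K)),
      ∀ k, b k = (g k).val * diagonal d * (g k)⁻¹.val := by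
  have hspan := span_conjugatesOf_diagonal hd hsum
  obtain ⟨f, hf, hspan', hli⟩ :=
    Submodule.exists_fun_fin_finrank_span_eq K (conjugatesOf (diagonal d))
  have hcard : Fintype.card (ι × ι) =
      Module.finrank K (Submodule.span K (conjugatesOf (diagonal d))) := by
    rw [hspan, finrank_top, Module.finrank_matrix]
    simp
  choose g hg using hf
  let e := Fintype.equivFinOfCardEq hcard
  refine ⟨g ∘ e, (Module.Basis.mk hli (hspan'.trans hspan).ge).reindex e.symm, fun k => ?_⟩
  rw [Module.Basis.reindex_apply, Module.Basis.mk_apply, Units.eq_mul_inv_iff_mul_eq]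
  exact (hg (e k)).symm

end ConjugatesSpan

section GenericModPrime

open Matrix

theorem eventually_intCast_zmod_ne_zero {z : ℤ} (hz : z ≠ 0) :
    ∀ᶠ p : ℕ in atTop, (z : ZMod p) ≠ 0 := by
  filter_upwards [eventually_gt_atTop z.natAbs] with p hp hzero
  rw [ZMod.intCast_zmod_eq_zero_iff_dvd] at hzero
  exact hz (Int.eq_zero_of_abs_lt_dvd hzero (by rw [Int.abs_eq_natAbs]; exact_mod_cast hp))

theorem eventually_injective_intCast_zmod {κ : Type*} [Finite κ] {f : κ → ℤ}
    (hf : Function.Injective f) :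
    ∀ᶠ p : ℕ in atTop, Function.Injective fun k => (f k : ZMod p) := by
  have hne (k l : κ) : ∀ᶠ p : ℕ in atTop, (f k : ZMod p) = f l → k = l := by
    obtain rfl | hkl := eq_or_ne k l
    · simp
    · filter_upwards [eventually_intCast_zmod_ne_zero (sub_ne_zero.2 (hf.ne hkl))] with p hp heq
      simp [heq] at hp
  filter_upwards [eventually_all.2 fun k => eventually_all.2 (hne k)] with p hp k l using hp k l

variable {n : ℕ}

/-- The integers `2 ^ (n * 2 ^ j)` for `j < n`, whose products over distinct sets of indices are
distinct. Divided by the `n`-th root `2 ^ (2 ^ n - 1)` of their product, they become the eigenvalues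
of a generic matrix of determinant one. -/
def dyadicPow (j : Fin n) : ℤ := 2 ^ (n * 2 ^ (j : ℕ))

theorem eq_of_two_pow_eq {a b : ℕ} (h : (2 : ℤ) ^ a = 2 ^ b) : a = b :=
  pow_right_injective₀ two_pos (by norm_num) h

theorem prod_dyadicPow (I : Finset (Fin n)) :
    ∏ j ∈ I, dyadicPow j = 2 ^ (n * ∑ j ∈ I, 2 ^ (j : ℕ)) := by
  simp only [dyadicPow, Finset.prod_pow_eq_pow_sum, Finset.mul_sum]

theorem prod_univ_dyadicPow : ∏ j : Fin n, dyadicPow j = (2 ^ (2 ^ n - 1)) ^ n := by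
  rw [prod_dyadicPow, Fin.sum_univ_eq_sum_range (fun j => 2 ^ j), Nat.geomSum_eq le_rfl, ← pow_mul,
    mul_comm n]
  simp

theorem sum_dyadicPow_ne_zero [NeZero n] : ∑ j : Fin n, dyadicPow j ≠ 0 :=
  (Finset.sum_pos (fun _ _ => pow_pos two_pos _) Finset.univ_nonempty).ne'

theorem prod_dyadicPow_injective :
    Function.Injective fun I : Finset (Fin n) => ∏ j ∈ I, dyadicPow j := by
  intro I J hIJ
  simp only [prod_dyadicPow] at hIJ
  obtain rfl | hn := eq_or_ne n 0
  · exact Subsingleton.elim I J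
  refine Finset.map_injective Fin.valEmbedding (Finset.geomSum_injective le_rfl ?_)
  simpa using Nat.eq_of_mul_eq_mul_left (Nat.pos_of_ne_zero hn) (eq_of_two_pow_eq hIJ)

theorem dyadicPow_mul_pow_injective :
    Function.Injective fun t : Fin n × Fin n => dyadicPow t.1 * dyadicPow t.2 ^ 2 ^ n := by
  rintro ⟨i, j⟩ ⟨i', j'⟩ h
  have hexp : 2 ^ (i : ℕ) + 2 ^ n * 2 ^ (j : ℕ) = 2 ^ (i' : ℕ) + 2 ^ n * 2 ^ (j' : ℕ) := by
    refine Nat.eq_of_mul_eq_mul_left i.pos (eq_of_two_pow_eq ?_)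
    simp only [dyadicPow] at h
    convert h using 1 <;> ring
  have hlt (k : Fin n) : 2 ^ (k : ℕ) < 2 ^ n := Nat.pow_lt_pow_right one_lt_two k.2
  have hi : 2 ^ (i : ℕ) = 2 ^ (i' : ℕ) := by
    have hmod := congrArg (· % 2 ^ n) hexp
    simpa only [Nat.add_mul_mod_self_left, Nat.mod_eq_of_lt (hlt _)] using hmod
  have hj : 2 ^ (j : ℕ) = 2 ^ (j' : ℕ) :=
    Nat.eq_of_mul_eq_mul_left (pow_pos two_pos n) (by omega)
  exact Prod.ext (Fin.ext (Nat.pow_right_injective le_rfl hi))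
    (Fin.ext (Nat.pow_right_injective le_rfl hj))

/-- The lower unitriangular matrix all of whose entries below the diagonal are ones. -/
def onesLower (n : ℕ) : Matrix (Fin n) (Fin n) ℤ := of fun i j => if j ≤ i then 1 else 0

theorem det_onesLower : (onesLower n).det = 1 := by
  rw [det_of_isLowerTriangular]
  · simp [onesLower]
  · intro i j hij
    have hlt : i < j := by simpa using hij
    simp [onesLower, hlt]

theorem onesLower_mul_transpose_pos (i j : Fin n) : 0 < (onesLower n * (onesLower n)ᵀ) i j := by
  have : NeZero n := ⟨i.pos.ne'⟩
  rw [Matrix.mul_apply]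
  refine Finset.sum_pos' (fun k _ => ?_) ⟨0, Finset.mem_univ _, ?_⟩
  · simp only [onesLower, transpose_apply, of_apply]
    positivity
  · simp [onesLower, transpose_apply]

theorem principalMinor_mul_transpose_ne_zero {L : Matrix (Fin n) (Fin n) ℤ} (hL : L.det ≠ 0)
    (I : Finset (Fin n)) : principalMinor (L * Lᵀ) I ≠ 0 := by
  let f := Int.castRingHom ℝ
  have hunit : IsUnit (f.mapMatrix L) := by
    rw [isUnit_iff_isUnit_det, ← RingHom.map_det, isUnit_iff_ne_zero]
    exact (map_ne_zero_iff f Int.cast_injective).2 hL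
  have hpos : (f.mapMatrix (L * Lᵀ)).PosDef := by
    rw [_root_.map_mul]
    exact PosDef.mul_conjTranspose_self _ (vecMul_injective_of_isUnit hunit)
  refine ne_zero_of_map (f := f) ?_
  rw [map_principalMinor]
  exact (hpos.submatrix Subtype.val_injective).det_pos.ne'

variable {p : ℕ} [Fact p.Prime]

/-- The reductions mod `p` of the `dyadicPow`, normalized to have product one. -/
def dyadicEigenvalue (p : ℕ) [Fact p.Prime] (j : Fin n) : ZMod p :=
  (dyadicPow j : ZMod p) * (2 ^ (2 ^ n - 1))⁻¹

theorem prod_dyadicEigenvalue (h2 : (2 : ZMod p) ≠ 0) :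
    ∏ j : Fin n, dyadicEigenvalue p j = 1 := by
  simp only [dyadicEigenvalue, Finset.prod_mul_distrib, ← Int.cast_prod, prod_univ_dyadicPow]
  simp [h2]

theorem isGeneric_diagonal_dyadicEigenvalue {s : Matrix (Fin n) (Fin n) ℤ}
    (h2 : (2 : ZMod p) ≠ 0)
    (hprod : Function.Injective fun I : Finset (Fin n) => ((∏ j ∈ I, dyadicPow j : ℤ) : ZMod p))
    (hmul : Function.Injective fun t : Fin n × Fin n =>
      ((dyadicPow t.1 * dyadicPow t.2 ^ 2 ^ n : ℤ) : ZMod p))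
    (hminor : ∀ I, ((principalMinor s I : ℤ) : ZMod p) ≠ 0)
    (hentry : ∀ t : Fin n × Fin n, ((s t.1 t.2 * s t.2 t.1 : ℤ) : ZMod p) ≠ 0) :
    IsGeneric (diagonal (dyadicEigenvalue p)) ((Int.castRingHom (ZMod p)).mapMatrix s) := by
  have hX : (2 ^ (2 ^ n - 1) : ZMod p) ≠ 0 := pow_ne_zero _ h2
  have hinj : Function.Injective fun j : Fin n => (dyadicPow j : ZMod p) := fun i j hij =>
    Finset.singleton_injective (hprod (by simpa using hij))
  refine isGeneric_diagonal_iff.2 ⟨fun i j hij => hinj (mul_right_cancel₀ (inv_ne_zero hX) hij),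
    ⟨fun I J hIJ => hprod ?_, fun I => ?_⟩, fun t t' ht => hmul ?_, fun t => ?_⟩
  · simpa [dyadicEigenvalue, mul_left_comm _ (Int.cast _), hX] using hIJ
  · rw [← map_principalMinor]
    exact hminor I
  · refine mul_right_cancel₀ (pow_ne_zero (1 + 2 ^ n) (inv_ne_zero hX)) ?_
    simp only [dyadicEigenvalue] at ht
    push_cast
    convert ht using 1 <;> ring
  · simpa using hentry t

theorem exists_prime_isGeneric (n : ℕ) [NeZero n] (B : ℕ) :
    ∃ p > B, p.Prime ∧ ∃ g s : Fin n × Fin n → Matrix (Fin n) (Fin n) (ZMod p),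
      (traceGram g).det ≠ 0 ∧ ∀ k, (g k).det = 1 ∧ (s k).det = 1 ∧ IsGeneric (g k) (s k) := by
  set s₀ := onesLower n * (onesLower n)ᵀ
  have hminor₀ (I : Finset (Fin n)) : principalMinor s₀ I ≠ 0 :=
    principalMinor_mul_transpose_ne_zero (by simp [det_onesLower]) I
  have hentry₀ (t : Fin n × Fin n) : s₀ t.1 t.2 * s₀ t.2 t.1 ≠ 0 :=
    (mul_pos (onesLower_mul_transpose_pos _ _) (onesLower_mul_transpose_pos _ _)).ne'
  obtain ⟨p, hp, hB, h2, hsum, hprod, hmul, hminor, hentry⟩ :=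
    ((Nat.frequently_atTop_iff_infinite.2 Nat.infinite_setOfPred_prime).and_eventually <|
      (eventually_gt_atTop B).and <|
      (eventually_intCast_zmod_ne_zero two_ne_zero).and <|
      (eventually_intCast_zmod_ne_zero (sum_dyadicPow_ne_zero (n := n))).and <|
      (eventually_injective_intCast_zmod (prod_dyadicPow_injective (n := n))).and <|
      (eventually_injective_intCast_zmod (dyadicPow_mul_pow_injective (n := n))).and <|
      (eventually_all.2 fun I => eventually_intCast_zmod_ne_zero (hminor₀ I)).and <|
      eventually_all.2 fun t => eventually_intCast_zmod_ne_zero (hentry₀ t)).exists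
  have : Fact p.Prime := ⟨hp⟩
  have h2 : (2 : ZMod p) ≠ 0 := by simpa using h2
  have hgeneric := isGeneric_diagonal_dyadicEigenvalue h2 hprod hmul hminor hentry
  have hd : Function.Injective (dyadicEigenvalue p (n := n)) :=
    (isGeneric_diagonal_iff.1 hgeneric).1
  have hdsum : ∑ j : Fin n, dyadicEigenvalue p j ≠ 0 := by
    simp only [dyadicEigenvalue, ← Finset.sum_mul, ← Int.cast_sum]
    exact mul_ne_zero hsum (inv_ne_zero (pow_ne_zero _ h2))
  obtain ⟨g, b, hb⟩ := exists_basis_units_conj_diagonal hd hdsum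
  refine ⟨p, hB, hp, b, fun k => (g k).val * (Int.castRingHom (ZMod p)).mapMatrix s₀ * (g k)⁻¹.val,
    det_traceGram_basis_ne_zero b, fun k => ⟨?_, ?_, ?_⟩⟩
  · rw [hb, det_units_conj, det_diagonal, prod_dyadicEigenvalue h2]
  · rw [det_units_conj, ← RingHom.map_det, det_mul, det_transpose, det_onesLower, mul_one, map_one]
  · rw [hb, isGeneric_units_conj_iff]
    exact hgeneric

end GenericModPrime

section FiniteQuotient

open scoped Pointwise

variable {Γ H : Type*} [Group Γ] [Group H] [Finite H]

theorem exists_mem_wordBall_map_eq (f : Γ →* H) {S : Set Γ} (hS : Subgroup.closure S = ⊤) (g : Γ) :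
    ∃ g' ∈ wordBall S (Nat.card H), f g' = f g := by
  classical
  have : Fintype H := Fintype.ofFinite H
  rw [Nat.card_eq_fintype_card]
  set T : Set H := f '' insert 1 (S ∪ S⁻¹)
  have hT : T.Nonempty := ⟨f 1, Set.mem_image_of_mem f (Set.mem_insert 1 _)⟩
  have hone : (1 : H) ∈ T ^ (Fintype.card H - 1) :=
    Set.one_mem_pow ⟨1, Set.mem_insert 1 _, map_one f⟩
  have hle : Subgroup.closure S ≤ (powCardSubgroup T hT).comap f := by
    refine (Subgroup.closure_le _).2 fun s hs => ?_
    have hcard : T ^ Fintype.card H = T ^ (Fintype.card H - 1) * T := by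
      rw [← pow_succ, Nat.sub_add_cancel Fintype.card_pos]
    change f s ∈ T ^ Fintype.card H
    rw [hcard, ← one_mul (f s)]
    exact Set.mul_mem_mul hone (Set.mem_image_of_mem f (Or.inr (Or.inl hs)))
  have hmem : f g ∈ T ^ Fintype.card H := hle (hS ▸ Subgroup.mem_top g)
  rwa [← Set.image_pow] at hmem

end FiniteQuotient

section GenericConfiguration

open Matrix

variable {n : ℕ} {Γ : Type*} [Group Γ]

theorem trace_transvection_mul_transvection {ι R : Type*} [Fintype ι] [DecidableEq ι] [CommRing R]
    {i j : ι} (hij : i ≠ j) (c : R) :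
    (transvection i j c * transvection j i 1).trace = Fintype.card ι + c := by
  simp [transvection, Matrix.add_mul, Matrix.mul_add, trace_single_eq_of_ne, hij, hij.symm,
    trace_single_eq_same]

theorem exists_sq_le_abs_trace_of_prime {p : ℕ} [Fact p.Prime] (hn : 2 ≤ n) (hp : 2 * n ^ 2 < p) :
    ∃ M : Matrix (Fin n) (Fin n) (ZMod p), M.det = 1 ∧ ∀ X : Matrix (Fin n) (Fin n) ℤ,
      (Int.castRingHom (ZMod p)).mapMatrix X = M → (n : ℤ) ^ 2 ≤ |X.trace| := by
  have : Nontrivial (Fin n) := Fin.nontrivial_iff_two_le.2 hn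
  obtain ⟨i, j, hij⟩ := exists_pair_ne (Fin n)
  refine ⟨transvection i j ((n : ZMod p) ^ 2 - n) * transvection j i 1, ?_, fun X hX => ?_⟩
  · rw [det_mul, det_transvection_of_ne _ _ hij, det_transvection_of_ne _ _ hij.symm, one_mul]
  have htrace : (((n ^ 2 : ℕ) : ℤ) : ZMod p) = (X.trace : ℤ) := by
    have hmap := AddMonoidHom.map_trace (Int.castRingHom (ZMod p)).toAddMonoidHom X
    have hX' := congrArg trace hX
    rw [trace_transvection_mul_transvection hij, Fintype.card_fin, add_sub_cancel] at hX'
    push_cast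
    exact hX'.symm.trans hmap.symm
  have hle := ZMod.natAbs_min_of_le_div_two p _ _ htrace (by rw [Int.natAbs_natCast]; lia)
  rw [Int.natAbs_natCast] at hle
  rw [Int.abs_eq_natAbs]
  exact_mod_cast hle

/-- The words in a generating set from which the ping-pong pair is built: whatever `w` is, each pair
`(w ^ e * u k, t k)` acts generically, the `u k` act by a basis of the space of matrices, and some
word of length at most `R` has trace at least `n ^ 2` in absolute value. -/
structure GenericConfiguration (ρ : Γ →* Matrix (Fin n) (Fin n) ℤ) (R e : ℕ) (S : Set Γ) where
  u : Fin n × Fin n → Γ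
  t : Fin n × Fin n → Γ
  u_mem : ∀ k, u k ∈ wordBall S R
  t_mem : ∀ k, t k ∈ wordBall S R
  gram_ne_zero : (traceGram fun k => ρ (u k)).det ≠ 0
  isGeneric : ∀ k w, IsGeneric (ρ (w ^ e * u k)) (ρ (t k))
  exists_le_trace : ∃ z ∈ wordBall S R, (n : ℤ) ^ 2 ≤ |(ρ z).trace|

theorem exists_genericConfiguration (hn : 2 ≤ n) (ρ : Γ →* Matrix (Fin n) (Fin n) ℤ)
    (hρ : ∀ (p : ℕ) [Fact p.Prime] (M : Matrix (Fin n) (Fin n) (ZMod p)), M.det = 1 →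
      ∃ g, (ρ g).map (Int.castRingHom (ZMod p)) = M) :
    ∃ R e : ℕ, 0 < e ∧ ∀ S : Set Γ, Subgroup.closure S = ⊤ →
      Nonempty (GenericConfiguration ρ R e S) := by
  have : NeZero n := ⟨by lia⟩
  obtain ⟨p, hp, hprime, g, s, hgram, hgs⟩ := exists_prime_isGeneric n (2 * n ^ 2)
  have : Fact p.Prime := ⟨hprime⟩
  set red := ((Int.castRingHom (ZMod p)).mapMatrix (m := Fin n)).toMonoidHom.comp ρ
  set e := Nat.card (Matrix (Fin n) (Fin n) (ZMod p))ˣ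
  have hpow (w : Γ) : red (w ^ e) = 1 := by
    rw [← MonoidHom.coe_toHomUnits, _root_.map_pow, pow_card_eq_one', Units.val_one]
  refine ⟨e, e, Nat.card_pos, fun S hS => ?_⟩
  have hlift (M : Matrix (Fin n) (Fin n) (ZMod p)) (hM : M.det = 1) :
      ∃ x ∈ wordBall S e, red x = M := by
    obtain ⟨x, hx⟩ := hρ p M hM
    obtain ⟨y, hy, hyx⟩ := exists_mem_wordBall_map_eq red.toHomUnits hS x
    exact ⟨y, hy, (congrArg Units.val hyx).trans hx⟩
  choose u hu hug using fun k => hlift (g k) (hgs k).1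
  choose t ht hts using fun k => hlift (s k) (hgs k).2.1
  obtain ⟨M, hM, hMtrace⟩ := exists_sq_le_abs_trace_of_prime hn hp
  obtain ⟨z, hz, hzM⟩ := hlift M hM
  refine ⟨⟨u, t, hu, ht, ?_, fun k w => ?_, z, hz, hMtrace _ hzM⟩⟩
  · refine ne_zero_of_map (f := Int.castRingHom (ZMod p)) ?_
    rw [RingHom.map_det, map_traceGram]
    exact (congrArg (fun g => (traceGram g).det) (funext hug)).trans_ne hgram
  · refine IsGeneric.of_map (Int.castRingHom (ZMod p)) ?_
    change IsGeneric (red (w ^ e * u k)) (red (t k))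
    rw [_root_.map_mul, hpow, one_mul, hug, hts]
    exact (hgs k).2.2

end GenericConfiguration

section RegularRepresentation

open Matrix Algebra
open scoped Kronecker

section Formulas

variable {ι κ K : Type*} [Fintype ι] [DecidableEq ι] [Fintype κ] [DecidableEq κ] [Field K]
  (b : Module.Basis κ K (Matrix ι ι K)) (x : Matrix ι ι K)

theorem leftMulMatrix_stdBasis_eq_kronecker :
    leftMulMatrix (Matrix.stdBasis K ι ι) x = x ⊗ₖ (1 : Matrix ι ι K) := by
  ext ⟨i, j⟩ ⟨k, l⟩
  rw [leftMulMatrix_eq_repr_mul, Matrix.stdBasis_eq_single]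
  change (x * single k l (1 : K)) i j = _
  obtain rfl | hjl := eq_or_ne j l
  · simp
  · simp [hjl]

theorem det_leftMulMatrix_matrix : (leftMulMatrix b x).det = x.det ^ Fintype.card ι := by
  rw [← norm_eq_matrix_det, norm_eq_matrix_det (Matrix.stdBasis K ι ι),
    leftMulMatrix_stdBasis_eq_kronecker, det_kronecker, det_one, one_pow, mul_one]

omit [DecidableEq ι] in
theorem basis_repr_eq_traceGram_inv_mulVec :
    b.repr x = (traceGram b)⁻¹ *ᵥ fun i => (b i * x).trace := by
  have hgram : (fun i => (b i * x).trace) = traceGram b *ᵥ b.repr x := by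
    ext i
    rw [traceGram_mulVec, b.sum_repr]
  rw [hgram, mulVec_mulVec,
    nonsing_inv_mul _ (isUnit_iff_ne_zero.2 (det_traceGram_basis_ne_zero b)), one_mulVec]

theorem leftMulMatrix_eq_traceGram_inv_mul :
    leftMulMatrix b x = (traceGram b)⁻¹ * of fun i j => (b i * x * b j).trace := by
  ext i j
  rw [leftMulMatrix_eq_repr_mul, basis_repr_eq_traceGram_inv_mulVec]
  simp only [mulVec, dotProduct, Matrix.mul_apply, of_apply, Matrix.mul_assoc]

theorem leftMulMatrix_basis_map_algEquiv {A B : Type*} [Ring A] [Algebra K A] [Ring B]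
    [Algebra K B] (b : Module.Basis κ K A) (f : A ≃ₐ[K] B) (x : A) :
    leftMulMatrix (b.map f.toLinearEquiv) (f x) = leftMulMatrix b x := by
  ext i j
  simp [leftMulMatrix_eq_repr_mul, ← _root_.map_mul]

end Formulas

attribute [local instance] Matrix.linftyOpNormedAddCommGroup Matrix.linftyOpNormedRing
  Matrix.linftyOpNormedAlgebra

variable {ι κ : Type*} [Fintype ι] [DecidableEq ι] [Fintype κ] [DecidableEq κ]

theorem norm_le_norm_leftMulMatrix_of_mul_eq_smul {𝕜 A : Type*} [NormedField 𝕜] [Ring A]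
    [Algebra 𝕜 A] (b : Module.Basis κ 𝕜 A) {x y : A} {μ : 𝕜} (hxy : x * y = μ • y) (hy : y ≠ 0) :
    ‖μ‖ ≤ ‖leftMulMatrix b x‖ := by
  have hpos : 0 < ‖leftMulMatrix b y‖ :=
    norm_pos_iff.2 ((map_ne_zero_iff _ (leftMulMatrix_injective b)).2 hy)
  refine le_of_mul_le_mul_right ?_ hpos
  rw [← norm_smul, ← _root_.map_smul, ← hxy, _root_.map_mul]
  exact norm_mul_le _ _

variable {Ω 𝕜 : Type*} {Λ : Ω → ℝ} [NormedField 𝕜] {b : Ω → Module.Basis κ 𝕜 (Matrix ι ι 𝕜)}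
  {x : Ω → Matrix ι ι 𝕜}

section TraceBounds

variable (hgram : ∀ i j, PolyBounded Λ fun ω => (b ω i * b ω j).trace)
  (hdet : ∀ ω, 1 ≤ ‖(traceGram (b ω)).det‖)

include hgram hdet

theorem PolyBounded.leftMulMatrix_of_trace_mul_mul
    (hx : ∀ i j, PolyBounded Λ fun ω => (b ω i * x ω * b ω j).trace) :
    PolyBounded Λ fun ω => leftMulMatrix (b ω) (x ω) := by
  simp only [leftMulMatrix_eq_traceGram_inv_mul]
  exact (of_entry (matrix_inv hgram (inv_of_one_le_norm hdet))).mul (of_entry hx)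

theorem PolyBounded.leftMulMatrix_of_trace_mul
    (hb : ∀ i, PolyBounded Λ fun ω => leftMulMatrix (b ω) (b ω i))
    (hx : ∀ i, PolyBounded Λ fun ω => (b ω i * x ω).trace) :
    PolyBounded Λ fun ω => leftMulMatrix (b ω) (x ω) := by
  have hexpand (ω : Ω) : leftMulMatrix (b ω) (x ω) =
      ∑ k, (b ω).repr (x ω) k • leftMulMatrix (b ω) (b ω k) := by
    conv_lhs => rw [← (b ω).sum_repr (x ω), map_sum]
    simp only [_root_.map_smul]
  simp only [hexpand, basis_repr_eq_traceGram_inv_mulVec]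
  exact .sum _ fun k _ => .smul (.sum _ fun j _ =>
    (matrix_inv hgram (inv_of_one_le_norm hdet) k j).mul (hx j)) (hb k)

end TraceBounds

section Invariants

variable (hx : PolyBounded Λ fun ω => leftMulMatrix (b ω) (x ω))

include hx

theorem PolyBounded.det_of_leftMulMatrix [Nonempty ι] : PolyBounded Λ fun ω => (x ω).det := by
  obtain ⟨c, hc⟩ := PolyBounded.det hx.entry
  refine ⟨c, fun ω => ?_⟩
  refine le_of_pow_le_pow_left₀ (Fintype.card_ne_zero (α := ι)) (by positivity) ?_
  have hone : 1 ≤ (2 + |Λ ω|) ^ c := one_le_pow₀ (by linarith [abs_nonneg (Λ ω)])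
  rw [← norm_pow, ← det_leftMulMatrix_matrix (b ω)]
  exact (hc ω).trans (le_self_pow₀ hone Fintype.card_ne_zero)

theorem PolyBounded.leftMulMatrix_inv (hdet : PolyBounded Λ fun ω => (x ω).det⁻¹) :
    PolyBounded Λ fun ω => (leftMulMatrix (b ω) (x ω))⁻¹ := by
  refine of_entry (matrix_inv hx.entry ?_)
  simp only [det_leftMulMatrix_matrix, ← inv_pow]
  exact hdet.pow _

end Invariants

end RegularRepresentation

section Diagonalization

open Matrix Polynomial

variable {K : Type*} [Field K] {n : ℕ} {A : Matrix (Fin n) (Fin n) K}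

theorem isNilpotent_aeval_prod_roots_charpoly {ι : Type*} [Fintype ι] [DecidableEq ι]
    [DecidableEq K] [IsAlgClosed K] (A : Matrix ι ι K) :
    IsNilpotent (aeval A (∏ a ∈ A.charpoly.roots.toFinset, (X - C a))) := by
  obtain ⟨m, hm⟩ := Multiset.le_smul_dedup A.charpoly.roots
  have hdvd := Multiset.prod_dvd_prod_of_le (Multiset.map_le_map (f := (X - C ·)) hm)
  rw [← (IsAlgClosed.splits A.charpoly).eq_prod_roots_of_monic (charpoly_monic A),
    Multiset.map_nsmul, Multiset.prod_nsmul] at hdvd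
  refine ⟨m, ?_⟩
  rw [← _root_.map_pow]
  exact aeval_eq_zero_of_dvd_aeval_eq_zero hdvd (aeval_self_charpoly A)

theorem hankelDet_traceSeq_eq_zero_of_isNilpotent_aeval {N : ℕ} {f : K[X]} (hf : f ≠ 0)
    (hdeg : f.natDegree < N) (hnil : IsNilpotent (aeval A f)) : hankelDet N (traceSeq A) = 0 := by
  have htrace (k : ℕ) : (A ^ k * aeval A f).trace = 0 := by
    have hcomm : Commute (A ^ k) (aeval A f) := by
      simpa only [_root_.map_pow, aeval_X] using (Commute.all (X ^ k) f).map (aeval A)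
    exact (isNilpotent_trace_of_isNilpotent (hcomm.isNilpotent_mul_left hnil)).eq_zero
  refine exists_mulVec_eq_zero_iff.1 ⟨fun k : Fin N => f.coeff k, fun h0 => ?_, ?_⟩
  · exact hf (leadingCoeff_eq_zero.1 (congrFun h0 ⟨f.natDegree, hdeg⟩))
  · ext i
    simp only [mulVec, dotProduct, of_apply, traceSeq]
    rw [Pi.zero_apply, ← htrace i, aeval_eq_sum_range' hdeg, Finset.mul_sum, trace_sum,
      ← Fin.sum_univ_eq_sum_range fun k => (A ^ (i : ℕ) * f.coeff k • A ^ k).trace]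
    refine Finset.sum_congr rfl fun k _ => ?_
    rw [Matrix.mul_smul, trace_smul, ← pow_add, smul_eq_mul, mul_comm]

theorem exists_units_conj_diagonal [IsAlgClosed K] (h : hankelDet n (traceSeq A) ≠ 0) :
    ∃ (l : Fin n → K) (g : (Matrix (Fin n) (Fin n) K)ˣ), A = g.val * diagonal l * g⁻¹.val := by
  classical
  have hcard : n ≤ A.charpoly.roots.toFinset.card := by
    by_contra! hlt
    refine h (hankelDet_traceSeq_eq_zero_of_isNilpotent_aeval
      (monic_prod_X_sub_C id A.charpoly.roots.toFinset).ne_zero ?_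
      (isNilpotent_aeval_prod_roots_charpoly A))
    simpa [natDegree_finsetProd_X_sub_C_eq_card] using hlt
  obtain ⟨l⟩ : Nonempty (Fin n ↪ A.charpoly.roots.toFinset) :=
    Function.Embedding.nonempty_of_card_le (by simpa using hcard)
  have hroot (j : Fin n) : Module.End.HasEigenvalue (toLin' A) (l j : K) := by
    rw [Module.End.hasEigenvalue_iff_isRoot_charpoly, charpoly_toLin']
    exact isRoot_of_mem_roots (Multiset.mem_toFinset.1 (l j).2)
  choose v hv using fun j => (hroot j).exists_hasEigenvector
  have hli : LinearIndependent K v := Module.End.eigenvectors_linearIndependent' (toLin' A)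
    (fun j => (l j : K)) (Subtype.val_injective.comp l.injective) v hv
  obtain ⟨g, hg⟩ : IsUnit (of v)ᵀ := linearIndependent_cols_iff_isUnit.1 hli
  refine ⟨fun j => l j, g, g.eq_mul_inv_iff_mul_eq.2 ?_⟩
  ext i j
  rw [hg, mul_diagonal, mul_comm (_ᵀ i j)]
  exact congrFun (hv j).apply_eq_smul i

end Diagonalization

section PingPong

variable {R : Type*} [NormedRing R] {P s x T : R} {D U : Rˣ} {K ε : ℝ}

/-- For an idempotent `P`, the element `x` carries the range of `P` isomorphically onto the graph
of `T`, seen as a map from the range of `P` to its kernel. -/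
structure IsSlope (P x T : R) : Prop where
  mul_proj : T * P = T
  proj_mul : P * T = 0
  exists_corner_inv : ∃ V, P * x * P * V = P
  graph : (1 - P) * x * P = T * (P * x * P)

theorem IsSlope.unique {T' : R} (h : IsSlope P x T) (h' : IsSlope P x T') : T = T' := by
  obtain ⟨V, hV⟩ := h.exists_corner_inv
  calc T = T * (P * x * P) * V := by rw [mul_assoc, hV, h.mul_proj]
    _ = T' * (P * x * P) * V := by rw [← h.graph, h'.graph]
    _ = T' := by rw [mul_assoc, hV, h'.mul_proj]

theorem IsSlope.one (hP : IsIdempotentElem P) : IsSlope P 1 0 :=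
  ⟨zero_mul P, mul_zero P, ⟨P, by simp only [mul_one, hP.eq]⟩,
    by rw [mul_one, zero_mul, hP.one_sub_mul_self]⟩

theorem IsSlope.mul_of_commute (h : IsSlope P x T) (hDP : Commute (D : R) P) :
    IsSlope P (D * x) (D * T * ↑D⁻¹) := by
  obtain ⟨V, hV⟩ := h.exists_corner_inv
  have hD'P : ↑D⁻¹ * P = P * ↑D⁻¹ := hDP.units_inv_left.eq
  have hDQ : D * (1 - P) = (1 - P) * D := ((Commute.one_right _).sub_right hDP).eq
  have hcorner : P * (D * x) * P = D * (P * x * P) := by simp only [← mul_assoc, hDP.eq]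
  refine ⟨?_, ?_, ⟨V * ↑D⁻¹, ?_⟩, ?_⟩
  · rw [mul_assoc, hD'P, ← mul_assoc, mul_assoc _ T, h.mul_proj]
  · rw [← mul_assoc, ← mul_assoc, ← hDP.eq, mul_assoc _ P, h.proj_mul, mul_zero, zero_mul]
  · rw [hcorner, ← mul_assoc, mul_assoc _ _ V, hV, hDP.eq, Units.mul_inv_cancel_right]
  · rw [hcorner, mul_assoc _ _ (_ * _), Units.inv_mul_cancel_left, mul_assoc _ T, ← h.graph]
    simp only [← mul_assoc, hDQ]

theorem IsSlope.mul_of_corner (hP : IsIdempotentElem P) (h : IsSlope P x T)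
    (hU : (U : R) = P * s * P + P * s * T + (1 - P)) :
    IsSlope P (s * x) (((1 - P) * s * P + (1 - P) * s * T) * ↑U⁻¹) := by
  obtain ⟨V, hV⟩ := h.exists_corner_inv
  have hTP : ∀ y, y * T * P = y * T := fun y => by rw [mul_assoc, h.mul_proj]
  have hUP : U * P = P * s * P + P * s * T := by
    rw [hU, add_mul, add_mul, hP.one_sub_mul_self, add_zero, hTP, mul_assoc _ P P, hP.eq]
  have hPU : P * U = U * P := by
    rw [hUP, hU, mul_add, mul_add, hP.mul_one_sub_self, add_zero]
    simp only [← mul_assoc, hP.eq]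
  have hU'P : ↑U⁻¹ * P = P * ↑U⁻¹ := (Commute.units_inv_right hPU).eq.symm
  have hgraph : x * P = (P + T) * (P * x * P) := by
    rw [add_mul, ← h.graph]
    simp only [← mul_assoc, hP.eq, sub_mul, one_mul, add_sub_cancel]
  have hcorner : P * (s * x) * P = U * (P * x * P) := by
    calc P * (s * x) * P = P * s * (x * P) := by simp only [mul_assoc]
      _ = U * P * (P * x * P) := by rw [hgraph, ← mul_assoc, mul_add, hUP]
      _ = U * (P * x * P) := by simp only [← mul_assoc, mul_assoc _ P P, hP.eq]
  refine ⟨?_, ?_, ⟨V * ↑U⁻¹, ?_⟩, ?_⟩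
  · rw [mul_assoc, hU'P, ← mul_assoc, add_mul, hTP, mul_assoc _ P P, hP.eq]
  · simp only [← mul_assoc, mul_add, hP.mul_one_sub_self, zero_mul, add_zero]
  · rw [hcorner, ← mul_assoc, mul_assoc _ _ V, hV, ← hPU, Units.mul_inv_cancel_right]
  · calc (1 - P) * (s * x) * P = (1 - P) * s * (x * P) := by simp only [mul_assoc]
      _ = ((1 - P) * s * P + (1 - P) * s * T) * (P * x * P) := by
        rw [hgraph, ← mul_assoc, mul_add]
      _ = _ := by rw [hcorner, mul_assoc _ (↑U⁻¹ : R), Units.inv_mul_cancel_left]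

/-- Quantitative transversality of `s` to the splitting given by the idempotent `P`: with control
`K`, the corner `P s P` is invertible on the range of `P`, and `s` does not preserve this range. -/
structure IsTransverse (P s : R) (K : ℝ) : Prop where
  one_le : 1 ≤ K
  idem : IsIdempotentElem P
  norm_proj_le : ‖P‖ ≤ K
  norm_compl_le : ‖1 - P‖ ≤ K
  norm_le : ‖s‖ ≤ K
  exists_corner : ∃ C : Rˣ, (C : R) = P * s * P + (1 - P) ∧ ‖(↑C⁻¹ : R)‖ ≤ K
  one_le_mul_norm : 1 ≤ K * ‖(1 - P) * s * P‖

theorem norm_mul_mul_le_of_le {a b c : R} {α β γ : ℝ} (ha : ‖a‖ ≤ α) (hb : ‖b‖ ≤ β)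
    (hc : ‖c‖ ≤ γ) : ‖a * b * c‖ ≤ α * β * γ :=
  norm_mul_le_of_le (norm_mul_le_of_le ha hb) hc

theorem IsSlope.norm_conj_le (h : IsSlope P x T) :
    ‖D * T * ↑D⁻¹‖ ≤ ‖D * (1 - P)‖ * ‖P * ↑D⁻¹‖ * ‖T‖ := by
  have hT : T = (1 - P) * T * P := by
    rw [sub_mul, h.proj_mul, one_mul, sub_zero, h.mul_proj]
  calc ‖D * T * ↑D⁻¹‖ = ‖D * (1 - P) * T * (P * ↑D⁻¹)‖ := by
        conv_lhs => rw [hT]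
        simp only [mul_assoc]
    _ ≤ ‖D * (1 - P)‖ * ‖T‖ * ‖P * ↑D⁻¹‖ := norm_mul_mul_le_of_le le_rfl le_rfl le_rfl
    _ = ‖D * (1 - P)‖ * ‖P * ↑D⁻¹‖ * ‖T‖ := by ring

theorem IsTransverse.norm_mul_pow_three_le (h : IsTransverse P s K) {t : ℝ} (ht : 0 ≤ t)
    (hle : t * (12 * K ^ 4) ≤ 1) : t * K ^ 3 ≤ 1 / 12 := by
  have : t * K ^ 3 ≤ t * K ^ 4 := by gcongr; exacts [h.one_le, by norm_num]
  linarith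

theorem IsTransverse.exists_isSlope_contract (h : IsTransverse P s K)
    (hDP : Commute (D : R) P) (hD : 48 * K ^ 8 * (‖D * (1 - P)‖ * ‖P * ↑D⁻¹‖) ≤ 1)
    (hx : IsSlope P x T) (hT : ‖T‖ ≤ 4 * K ^ 4) :
    ∃ T', IsSlope P (D * x) T' ∧ ‖T'‖ * (12 * K ^ 4) ≤ 1 := by
  have hK := h.one_le
  refine ⟨_, hx.mul_of_commute hDP, ?_⟩
  calc ‖D * T * ↑D⁻¹‖ * (12 * K ^ 4)
      ≤ ‖D * (1 - P)‖ * ‖P * ↑D⁻¹‖ * (4 * K ^ 4) * (12 * K ^ 4) := by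
        gcongr
        exact hx.norm_conj_le.trans (by gcongr)
    _ = 48 * K ^ 8 * (‖D * (1 - P)‖ * ‖P * ↑D⁻¹‖) := by ring
    _ ≤ 1 := hD

variable [CompleteSpace R]

theorem exists_units_eq_add (C : Rˣ) {E : R} (hE : ‖(↑C⁻¹ : R)‖ * ‖E‖ ≤ 1 / 12) :
    ∃ U : Rˣ, (U : R) = C + E ∧ ‖(↑U⁻¹ : R)‖ ≤ 2 * ‖(↑C⁻¹ : R)‖ := by
  have hlt : ‖-(↑C⁻¹ * E)‖ < 1 := by
    rw [norm_neg]
    exact (norm_mul_le _ _).trans_lt (hE.trans_lt (by norm_num))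
  obtain ⟨w, hw⟩ := isUnit_one_sub_of_norm_lt_one hlt
  have hU : ((C * w : Rˣ) : R) = C + E := by
    rw [Units.val_mul, hw, sub_neg_eq_add, mul_add, mul_one, Units.mul_inv_cancel_left]
  refine ⟨C * w, hU, ?_⟩
  set U := C * w
  have hinv : (↑U⁻¹ : R) = ↑C⁻¹ - ↑U⁻¹ * E * ↑C⁻¹ := by
    rw [eq_sub_iff_add_eq, ← Units.mul_inv_cancel_right (↑U⁻¹ : R) C, ← add_mul]
    rw [Units.mul_inv_cancel_right, ← mul_add, ← hU, Units.inv_mul, one_mul]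
  have hle : ‖(↑U⁻¹ : R)‖ ≤ ‖(↑C⁻¹ : R)‖ + ‖(↑U⁻¹ : R)‖ * (‖(↑C⁻¹ : R)‖ * ‖E‖) :=
    calc ‖(↑U⁻¹ : R)‖ ≤ ‖(↑C⁻¹ : R)‖ + ‖↑U⁻¹ * E * (↑C⁻¹ : R)‖ :=
          (congrArg norm hinv).trans_le (norm_sub_le _ _)
      _ ≤ ‖(↑C⁻¹ : R)‖ + ‖(↑U⁻¹ : R)‖ * ‖E‖ * ‖(↑C⁻¹ : R)‖ := by
          gcongr; exact norm_mul_mul_le_of_le le_rfl le_rfl le_rfl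
      _ = _ := by ring
  linarith [mul_le_mul_of_nonneg_left hE (norm_nonneg (↑U⁻¹ : R)), norm_nonneg (↑C⁻¹ : R)]

theorem IsTransverse.exists_perturbed_corner (h : IsTransverse P s K)
    (hT : ‖T‖ * (12 * K ^ 4) ≤ 1) :
    ∃ U : Rˣ, (U : R) = P * s * P + P * s * T + (1 - P) ∧ ‖(U : R)‖ ≤ 3 * K ^ 3 ∧
      ‖(↑U⁻¹ : R)‖ ≤ 2 * K := by
  obtain ⟨C, hC, nC⟩ := h.exists_corner
  have hK := h.one_le
  have nE : ‖P * s * T‖ ≤ K * K * ‖T‖ := norm_mul_mul_le_of_le h.norm_proj_le h.norm_le le_rfl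
  have hT3 := h.norm_mul_pow_three_le (norm_nonneg T) hT
  obtain ⟨U, hU, nU⟩ := exists_units_eq_add C (E := P * s * T) <|
    calc ‖(↑C⁻¹ : R)‖ * ‖P * s * T‖ ≤ K * (K * K * ‖T‖) := by gcongr
      _ = ‖T‖ * K ^ 3 := by ring
      _ ≤ 1 / 12 := hT3
  refine ⟨U, by rw [hU, hC]; abel, ?_, nU.trans (by gcongr)⟩
  have nPsP : ‖P * s * P‖ ≤ K * K * K :=
    norm_mul_mul_le_of_le h.norm_proj_le h.norm_le h.norm_proj_le
  have hK3 : K ≤ K ^ 3 := le_self_pow₀ hK (by norm_num)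
  have hle : K * K * ‖T‖ ≤ ‖T‖ * K ^ 3 := by
    rw [mul_comm, ← sq]
    gcongr
    norm_num
  calc ‖(U : R)‖ ≤ ‖P * s * P‖ + ‖1 - P‖ + ‖P * s * T‖ := by rw [hU, hC]; exact norm_add₃_le
    _ ≤ K * K * K + K + K * K * ‖T‖ := add_le_add_three nPsP h.norm_compl_le nE
    _ ≤ 3 * K ^ 3 := by nlinarith

theorem IsTransverse.exists_isSlope_mul (h : IsTransverse P s K) (hx : IsSlope P x T)
    (hT : ‖T‖ * (12 * K ^ 4) ≤ 1) :
    ∃ T', IsSlope P (s * x) T' ∧ 1 < ‖T'‖ * (12 * K ^ 4) ∧ ‖T'‖ ≤ 4 * K ^ 4 := by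
  obtain ⟨U, hU, nU, nU'⟩ := h.exists_perturbed_corner hT
  have hK := h.one_le
  have hT3 := h.norm_mul_pow_three_le (norm_nonneg T) hT
  have nF : ‖(1 - P) * s * T‖ ≤ K * K * ‖T‖ :=
    norm_mul_mul_le_of_le h.norm_compl_le h.norm_le le_rfl
  refine ⟨_, hx.mul_of_corner h.idem hU, ?_, ?_⟩
  · set T' := ((1 - P) * s * P + (1 - P) * s * T) * ↑U⁻¹ with hT'
    have hcorner : (1 - P) * s * P = T' * U - (1 - P) * s * T := by
      rw [hT', Units.inv_mul_cancel_right, add_sub_cancel_right]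
    have hle : 1 ≤ 3 * (‖T'‖ * K ^ 4) + ‖T‖ * K ^ 3 :=
      calc 1 ≤ K * ‖(1 - P) * s * P‖ := h.one_le_mul_norm
        _ ≤ K * (‖T'‖ * (3 * K ^ 3) + K * K * ‖T‖) := by
          rw [hcorner]
          gcongr
          exact (norm_sub_le _ _).trans (add_le_add (norm_mul_le_of_le le_rfl nU) nF)
        _ = 3 * (‖T'‖ * K ^ 4) + ‖T‖ * K ^ 3 := by ring
    linarith
  · have nQsP : ‖(1 - P) * s * P‖ ≤ K * K * K :=
      norm_mul_mul_le_of_le h.norm_compl_le h.norm_le h.norm_proj_le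
    calc _ ≤ (K * K * K + K * K * ‖T‖) * (2 * K) :=
          norm_mul_le_of_le ((norm_add_le _ _).trans (add_le_add nQsP nF)) nU'
      _ = 2 * K ^ 4 + 2 * (‖T‖ * K ^ 3) := by ring
      _ ≤ 4 * K ^ 4 := by linarith [one_le_pow₀ hK (n := 4)]

theorem IsTransverse.exists_isSlope_boolWord (h : IsTransverse P s K)
    (hDP : Commute (D : R) P) (hD : 48 * K ^ 8 * (‖D * (1 - P)‖ * ‖P * ↑D⁻¹‖) ≤ 1)
    (l : List Bool) : ∃ T, IsSlope P (boolWord (D : R) (s * D) l) T ∧ ‖T‖ ≤ 4 * K ^ 4 := by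
  have hK := h.one_le
  induction l with
  | nil => exact ⟨0, IsSlope.one h.idem, by rw [norm_zero]; positivity⟩
  | cons c l ih =>
    obtain ⟨T, hT, nT⟩ := ih
    obtain ⟨T₁, hT₁, nT₁⟩ := h.exists_isSlope_contract hDP hD hT nT
    rw [boolWord_cons]
    cases c with
    | false => exact ⟨T₁, hT₁, by nlinarith [norm_nonneg T₁, one_le_pow₀ hK (n := 4)]⟩
    | true =>
      obtain ⟨T₂, hT₂, -, nT₂⟩ := h.exists_isSlope_mul hT₁ nT₁
      exact ⟨T₂, by simpa only [cond_true, mul_assoc] using hT₂, nT₂⟩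

/-- Words starting with `D` have slope at most `1 / (12 K ^ 4)`, those starting with `s * D` have
larger slope. -/
theorem IsTransverse.separatesWords (h : IsTransverse P s K) (hs : IsLeftRegular s)
    (hDP : Commute (D : R) P) (hD : 48 * K ^ 8 * (‖D * (1 - P)‖ * ‖P * ↑D⁻¹‖) ≤ 1) :
    SeparatesWords (D : R) (s * D) := by
  have hDreg : IsLeftRegular (D : R) := D.isUnit.isRegular.left
  refine separatesWords_of_ne hDreg (hs.mul hDreg) fun l l' heq => ?_
  obtain ⟨T, hT, nT⟩ := h.exists_isSlope_boolWord hDP hD l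
  obtain ⟨T', hT', nT'⟩ := h.exists_isSlope_boolWord hDP hD l'
  obtain ⟨T₁, hT₁, nT₁⟩ := h.exists_isSlope_contract hDP hD hT nT
  obtain ⟨T₁', hT₁', nT₁'⟩ := h.exists_isSlope_contract hDP hD hT' nT'
  obtain ⟨T₂, hT₂, nT₂, -⟩ := h.exists_isSlope_mul hT₁' nT₁'
  rw [heq, mul_assoc] at hT₁
  rw [hT₁.unique hT₂] at nT₁
  exact nT₁.not_gt nT₂

end PingPong

section TransverseBounds

open Matrix Algebra

attribute [local instance] Matrix.linftyOpNormedAddCommGroup Matrix.linftyOpNormedRing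
  Matrix.linftyOpNormedAlgebra

variable {n : ℕ}

theorem single_eq_sum_vandermonde_inv_smul {K : Type*} [Field K] {l : Fin n → K}
    (hl : Function.Injective l) (j : Fin n) :
    single j j 1 = ∑ k : Fin n, (vandermonde l)⁻¹ k j • diagonal l ^ (k : ℕ) := by
  have hV : vandermonde l * (vandermonde l)⁻¹ = 1 :=
    mul_nonsing_inv _ (det_vandermonde_ne_zero_iff.2 hl).isUnit
  have hdiag : diagonal (fun i => (vandermonde l * (vandermonde l)⁻¹) i j) =
      ∑ k : Fin n, (vandermonde l)⁻¹ k j • diagonal l ^ (k : ℕ) := by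
    ext i i'
    simp only [Matrix.mul_apply, vandermonde_apply, diagonal_pow, ← diagonal_smul, Matrix.sum_apply,
      diagonal_apply, Pi.smul_apply, Pi.pow_apply, smul_eq_mul]
    split_ifs <;> simp [mul_comm]
  rw [← hdiag, hV, ← diagonal_single]
  congr 1 with i
  rw [one_apply, Pi.single_apply]

theorem coordProj_eq_sum_single {ι K : Type*} [DecidableEq ι] [CommRing K] (I : Finset ι) :
    coordProj K I = ∑ i ∈ I, single i i 1 := by
  ext i j
  simp only [coordProj, diagonal_apply, Matrix.sum_apply, single_apply, ite_and, Finset.sum_ite_eq']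
  split_ifs <;> rfl

theorem norm_offDiag_le_norm_leftMulMatrix {ι κ 𝕜 : Type*} [Fintype ι] [DecidableEq ι] [Fintype κ]
    [DecidableEq κ] [NormedField 𝕜] (b : Module.Basis κ 𝕜 (Matrix ι ι 𝕜)) (s : Matrix ι ι 𝕜)
    (j k : ι) :
    ‖s j k * s k j‖ ≤ ‖leftMulMatrix b (single j j 1 * s * single k k 1 * s)‖ := by
  refine norm_le_norm_leftMulMatrix_of_mul_eq_smul b (y := single j j 1) ?_ ?_
  · rw [single_mul_mul_single, single_mul_mul_single, smul_single]
    simp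
  · exact fun h => one_ne_zero (α := 𝕜) (by simpa using congrFun₂ h j j)

theorem norm_offDiag_le_mul_norm_corner {ι κ 𝕜 : Type*} [Fintype ι] [DecidableEq ι] [Fintype κ]
    [DecidableEq κ] [NormedField 𝕜] (b : Module.Basis κ 𝕜 (Matrix ι ι 𝕜)) (s : Matrix ι ι 𝕜)
    {I : Finset ι} {j k : ι} (hj : j ∉ I) (hk : k ∈ I) :
    ‖s j k * s k j‖ ≤ ‖leftMulMatrix b (single j j 1)‖ *
      ‖(1 - leftMulMatrix b (coordProj 𝕜 I)) * leftMulMatrix b s *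
        leftMulMatrix b (coordProj 𝕜 I)‖ *
      ‖leftMulMatrix b (single k k 1)‖ * ‖leftMulMatrix b s‖ := by
  have hcorner : single j j 1 * s * single k k 1 * s =
      single j j 1 * ((1 - coordProj 𝕜 I) * s * coordProj 𝕜 I) * single k k 1 * s := by
    rw [one_sub_coordProj, single_mul_mul_single, single_mul_mul_single, coordProj, coordProj,
      mul_diagonal, diagonal_mul, if_pos hk, if_pos (Finset.mem_compl.2 hj)]
    simp only [one_mul, mul_one]
  refine (norm_offDiag_le_norm_leftMulMatrix b s j k).trans ?_
  rw [hcorner]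
  simp only [_root_.map_mul, _root_.map_sub, _root_.map_one]
  refine norm_mul_le_of_le (norm_mul_mul_le_of_le le_rfl le_rfl le_rfl) le_rfl

theorem isTransverse_of_norm_le {ι κ 𝕜 : Type*} [Fintype ι] [DecidableEq ι] [Fintype κ]
    [DecidableEq κ] [NormedField 𝕜] (b : Module.Basis κ 𝕜 (Matrix ι ι 𝕜)) {s : Matrix ι ι 𝕜}
    {I : Finset ι} {j k : ι} {K : ℝ} (hj : j ∉ I) (hk : k ∈ I) (hminor : principalMinor s I ≠ 0)
    (hne : s j k * s k j ≠ 0) (hK : 1 ≤ K) (hproj : ‖leftMulMatrix b (coordProj 𝕜 I)‖ ≤ K)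
    (hcompl : ‖leftMulMatrix b (coordProj 𝕜 Iᶜ)‖ ≤ K) (hs : ‖leftMulMatrix b s‖ ≤ K)
    (hcorner : ‖(leftMulMatrix b
      (coordProj 𝕜 I * s * coordProj 𝕜 I + (1 - coordProj 𝕜 I)))⁻¹‖ ≤ K)
    (hoffDiag : ‖(s j k * s k j)⁻¹‖ * ‖leftMulMatrix b (single j j 1)‖ *
      ‖leftMulMatrix b (single k k 1)‖ * ‖leftMulMatrix b s‖ ≤ K) :
    IsTransverse (leftMulMatrix b (coordProj 𝕜 I)) (leftMulMatrix b s) K := by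
  have hunit : IsUnit (leftMulMatrix b
      (coordProj 𝕜 I * s * coordProj 𝕜 I + (1 - coordProj 𝕜 I))).det := by
    rw [det_leftMulMatrix_matrix, det_corner_eq_principalMinor]
    exact (IsUnit.mk0 _ hminor).pow _
  set L := leftMulMatrix b
  refine ⟨hK, ?_, hproj, ?_, hs, ⟨nonsingInvUnit _ hunit, ?_, hcorner⟩, ?_⟩
  · rw [IsIdempotentElem, ← _root_.map_mul, coordProj_mul_self]
  · rwa [← _root_.map_one L, ← _root_.map_sub, one_sub_coordProj]
  · change L _ = _
    simp only [_root_.map_add, _root_.map_sub, _root_.map_mul, _root_.map_one]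
  · set W := (1 - L (coordProj 𝕜 I)) * L s * L (coordProj 𝕜 I)
    calc 1 = ‖(s j k * s k j)⁻¹‖ * ‖s j k * s k j‖ := by
          rw [_root_.norm_inv, inv_mul_cancel₀ (norm_ne_zero_iff.2 hne)]
      _ ≤ ‖(s j k * s k j)⁻¹‖ * (‖L (single j j 1)‖ * ‖W‖ * ‖L (single k k 1)‖ * ‖L s‖) := by
        gcongr
        exact norm_offDiag_le_mul_norm_corner b s hj hk
      _ = ‖(s j k * s k j)⁻¹‖ * ‖L (single j j 1)‖ * ‖L (single k k 1)‖ * ‖L s‖ * ‖W‖ := by ring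
      _ ≤ K * ‖W‖ := by gcongr

/-- A quantitative form of `IsGeneric`: the invariants have absolute value at least `1`, as they do
when they come from integer matrices. -/
structure HasLargeInvariants {𝕜 : Type*} [NormedField 𝕜] (A s : Matrix (Fin n) (Fin n) 𝕜) :
    Prop where
  trace : 1 ≤ ‖hankelDet n (traceSeq A)‖
  minor : 1 ≤ ‖hankelDet (2 ^ n) (minorSeq A s)‖
  offDiag : 1 ≤ ‖hankelDet (n ^ 2) (offDiagSeq A s)‖

theorem IsGeneric.hasLargeInvariants {A s : Matrix (Fin n) (Fin n) ℤ} (h : IsGeneric A s) :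
    HasLargeInvariants ((Int.castRingHom ℂ).mapMatrix A) ((Int.castRingHom ℂ).mapMatrix s) := by
  have hone {z : ℤ} (hz : z ≠ 0) : 1 ≤ ‖Int.castRingHom ℂ z‖ := by
    rw [eq_intCast, Complex.norm_intCast]
    exact_mod_cast Int.one_le_abs hz
  have htrace := hone h.trace
  have hminor := hone h.minor
  have hoffDiag := hone h.offDiag
  simp only [map_hankelDet, map_traceSeq, map_minorSeq, map_offDiagSeq] at htrace hminor hoffDiag
  exact ⟨htrace, hminor, hoffDiag⟩

variable {Ω κ 𝕜 : Type*} {Λ : Ω → ℝ} [Fintype κ] [DecidableEq κ] [NormedField 𝕜]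

theorem HasLargeInvariants.of_units_conj {A s : Matrix (Fin n) (Fin n) 𝕜}
    (g : (Matrix (Fin n) (Fin n) 𝕜)ˣ)
    (h : HasLargeInvariants (g.val * A * g⁻¹.val) (g.val * s * g⁻¹.val)) :
    HasLargeInvariants A s := by
  have htrace := traceSeq_units_conj g A
  have hminor := minorSeq_units_conj g A s
  have hoffDiag := offDiagSeq_units_conj g A s
  exact ⟨htrace ▸ h.trace, hminor ▸ h.minor, hoffDiag ▸ h.offDiag⟩

theorem HasLargeInvariants.isGeneric {A s : Matrix (Fin n) (Fin n) 𝕜}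
    (h : HasLargeInvariants A s) : IsGeneric A s := by
  have hne {x : 𝕜} (hx : 1 ≤ ‖x‖) : x ≠ 0 := norm_pos_iff.1 (zero_lt_one.trans_le hx)
  exact ⟨hne h.trace, hne h.minor, hne h.offDiag⟩

variable {b : Ω → Module.Basis κ 𝕜 (Matrix (Fin n) (Fin n) 𝕜)} {l : Ω → Fin n → 𝕜}
  {s : Ω → Matrix (Fin n) (Fin n) 𝕜}

variable (hl : PolyBounded Λ fun ω => leftMulMatrix (b ω) (diagonal (l ω)))

include hl

theorem PolyBounded.of_leftMulMatrix_diagonal (j : Fin n) : PolyBounded Λ fun ω => l ω j :=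
  hl.mono fun ω => norm_le_norm_leftMulMatrix_of_mul_eq_smul (b ω) (y := single j j 1)
    (by ext i k; simp +contextual [diagonal_mul, single_apply, eq_comm (a := j)])
    fun h => one_ne_zero (α := 𝕜) (by simpa using congrFun₂ h j j)

theorem PolyBounded.leftMulMatrix_single
    (htrace : ∀ ω, 1 ≤ ‖hankelDet n (traceSeq (diagonal (l ω)))‖) (j : Fin n) :
    PolyBounded Λ fun ω => leftMulMatrix (b ω) (single j j 1) := by
  have hdet (ω : Ω) : 1 ≤ ‖(vandermonde (l ω)).det‖ := by
    have := htrace ω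
    rw [traceSeq_diagonal, hankelDet_powerSum (Equiv.refl _), Finset.prod_const_one, mul_one,
      norm_pow] at this
    exact (one_le_pow_iff_of_nonneg (norm_nonneg _) two_ne_zero).1 this
  have hinj (ω : Ω) : Function.Injective (l ω) :=
    det_vandermonde_ne_zero_iff.1 (norm_pos_iff.1 (zero_lt_one.trans_le (hdet ω)))
  have hexpand (ω : Ω) : leftMulMatrix (b ω) (single j j 1) =
      ∑ k : Fin n, (vandermonde (l ω))⁻¹ k j • leftMulMatrix (b ω) (diagonal (l ω)) ^ (k : ℕ) := by
    rw [single_eq_sum_vandermonde_inv_smul (hinj ω), map_sum]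
    simp only [_root_.map_smul, _root_.map_pow]
  simp only [hexpand]
  exact .sum _ fun k _ => (matrix_inv (fun i k => (hl.of_leftMulMatrix_diagonal i).pow k)
    (.inv_of_one_le_norm hdet) k j).smul (hl.pow k)

theorem PolyBounded.leftMulMatrix_coordProj
    (htrace : ∀ ω, 1 ≤ ‖hankelDet n (traceSeq (diagonal (l ω)))‖) (I : Finset (Fin n)) :
    PolyBounded Λ fun ω => leftMulMatrix (b ω) (coordProj 𝕜 I) := by
  simp only [coordProj_eq_sum_single, map_sum]
  exact .sum _ fun j _ => hl.leftMulMatrix_single htrace j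

variable (hs : PolyBounded Λ fun ω => leftMulMatrix (b ω) (s ω))
  (hinv : ∀ ω, HasLargeInvariants (diagonal (l ω)) (s ω))

include hs hinv

theorem PolyBounded.inv_leftMulMatrix_corner [Nonempty (Fin n)] (I : Finset (Fin n)) :
    PolyBounded Λ fun ω => (leftMulMatrix (b ω)
      (coordProj 𝕜 I * s ω * coordProj 𝕜 I + (1 - coordProj 𝕜 I)))⁻¹ := by
  have hcorner (I : Finset (Fin n)) : PolyBounded Λ fun ω => leftMulMatrix (b ω)
      (coordProj 𝕜 I * s ω * coordProj 𝕜 I + (1 - coordProj 𝕜 I)) := by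
    have hproj := hl.leftMulMatrix_coordProj fun ω => (hinv ω).trace
    simp only [one_sub_coordProj, _root_.map_add, _root_.map_mul]
    exact (((hproj I).mul hs).mul (hproj I)).add (hproj Iᶜ)
  refine (hcorner I).leftMulMatrix_inv ?_
  have hminor := fun ω => (hinv ω).minor
  simp only [minorSeq_diagonal] at hminor
  simp only [det_corner_eq_principalMinor]
  refine .inv_weight_of_hankelDet (Fintype.equivFinOfCardEq (by simp))
    (fun I => .prod I fun j _ => (const _).mul (hl.of_leftMulMatrix_diagonal j)) (fun I => ?_)
    hminor I
  simpa only [det_corner_eq_principalMinor] using (hcorner I).det_of_leftMulMatrix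

theorem PolyBounded.inv_offDiag (j k : Fin n) :
    PolyBounded Λ fun ω => (s ω j k * s ω k j)⁻¹ := by
  have hsingle := hl.leftMulMatrix_single fun ω => (hinv ω).trace
  have hoffDiag := fun ω => (hinv ω).offDiag
  simp only [offDiagSeq_diagonal] at hoffDiag
  refine .inv_weight_of_hankelDet (κ := Fin n × Fin n) (Fintype.equivFinOfCardEq (by simp [sq]))
    (fun t => (hl.of_leftMulMatrix_diagonal t.1).mul ((hl.of_leftMulMatrix_diagonal t.2).pow _))
    (fun t => mono ?_ fun ω => norm_offDiag_le_norm_leftMulMatrix (b ω) (s ω) t.1 t.2) hoffDiag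
    (j, k)
  simp only [_root_.map_mul]
  exact (((hsingle t.1).mul hs).mul (hsingle t.2)).mul hs

theorem exists_forall_isTransverse_of_mem (hΛ : ∀ ω, 2 ≤ Λ ω) {I : Finset (Fin n)} {j k : Fin n}
    (hj : j ∉ I) (hk : k ∈ I) :
    ∃ c : ℕ, ∀ ω, IsTransverse (leftMulMatrix (b ω) (coordProj 𝕜 I))
      (leftMulMatrix (b ω) (s ω)) (Λ ω ^ c) := by
  have : Nonempty (Fin n) := ⟨j⟩
  have htrace := fun ω => (hinv ω).trace
  have hsingle (j : Fin n) := (hl.leftMulMatrix_single htrace j).norm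
  have hproj (I : Finset (Fin n)) := hl.leftMulMatrix_coordProj htrace I
  have hbound := ((((hproj I).norm.add (hproj Iᶜ).norm).add hs.norm).add
    (hl.inv_leftMulMatrix_corner hs hinv I).norm).add
    ((((hl.inv_offDiag hs hinv j k).norm.mul (hsingle j)).mul (hsingle k)).mul hs.norm)
  obtain ⟨c, hc⟩ := hbound.exists_forall_le_pow hΛ
  refine ⟨c, fun ω => ?_⟩
  have hcω := (le_abs_self _).trans (hc ω)
  obtain ⟨-, ⟨-, hminor⟩, -, hoffDiag⟩ := isGeneric_diagonal_iff.1 (hinv ω).isGeneric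
  have hnonneg := fun M : Matrix κ κ 𝕜 => norm_nonneg M
  set L := leftMulMatrix (b ω)
  set X := coordProj 𝕜 I * s ω * coordProj 𝕜 I + (1 - coordProj 𝕜 I)
  have hq : 0 ≤ ‖(s ω j k * s ω k j)⁻¹‖ * ‖L (single j j 1)‖ * ‖L (single k k 1)‖ * ‖L (s ω)‖ := by
    positivity
  refine isTransverse_of_norm_le (b ω) hj hk (hminor I) (hoffDiag (j, k))
    (one_le_pow₀ (by linarith [hΛ ω])) ?_ ?_ ?_ ?_ ?_ <;>
  linarith [hnonneg (L (coordProj 𝕜 I)), hnonneg (L (coordProj 𝕜 Iᶜ)), hnonneg (L (s ω)),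
    hnonneg (L X)⁻¹]

end TransverseBounds

section SpectralGap

theorem exists_forall_le_or_add_one_le {ι : Type*} [Fintype ι] {f : ι → ℝ} {a b : ι}
    (hab : f b + Fintype.card ι ≤ f a) :
    ∃ x, f b ≤ x ∧ x + 1 ≤ f a ∧ ∀ k, f k ≤ x ∨ x + 1 ≤ f k := by
  classical
  obtain ⟨i, hi, himage⟩ : ∃ i ∈ Finset.Icc ⌈f b⌉ (⌈f b⌉ + Fintype.card ι),
      i ∉ Finset.univ.image fun k => ⌈f k⌉ := by
    by_contra! hsubset
    have hcard := (Finset.card_le_card hsubset).trans Finset.card_image_le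
    rw [Int.card_Icc, Finset.card_univ] at hcard
    lia
  have hne (k : ι) : ⌈f k⌉ ≠ i := fun h => himage (Finset.mem_image.2 ⟨k, Finset.mem_univ k, h⟩)
  have hdichotomy (k : ι) : f k ≤ (i - 1 : ℤ) ∨ ((i : ℤ) : ℝ) ≤ f k := by
    rcases (hne k).lt_or_gt with h | h
    · exact .inl (Int.ceil_le.1 (by lia))
    · exact .inr (Int.lt_ceil.1 h).le
  obtain ⟨hbi, hia⟩ := Finset.mem_Icc.1 hi
  refine ⟨(i - 1 : ℤ), Int.ceil_le.1 (by have := hne b; lia), ?_, fun k => ?_⟩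
  · have hceil : ⌈f b⌉ + Fintype.card ι ≤ ⌈f a⌉ := by
      rw [← Int.ceil_add_natCast]
      exact Int.ceil_mono hab
    have := Int.lt_ceil.1 (lt_of_le_of_ne (hia.trans hceil) (hne a).symm)
    push_cast
    linarith
  · simpa using hdichotomy k

theorem exists_forall_le_or_mul_le {ι : Type*} [Fintype ι] {r : ι → ℝ} (hr : ∀ k, 0 < r k)
    {Λ : ℝ} (hΛ : 1 < Λ) {a b : ι} (hab : r b * Λ ^ Fintype.card ι ≤ r a) :
    ∃ θ, 0 < θ ∧ r b ≤ θ ∧ θ * Λ ≤ r a ∧ ∀ k, r k ≤ θ ∨ θ * Λ ≤ r k := by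
  have hΛ0 : 0 < Λ := zero_lt_one.trans hΛ
  have hlog : Real.logb Λ (r b) + Fintype.card ι ≤ Real.logb Λ (r a) := by
    rw [← Real.rpow_le_rpow_left_iff hΛ, Real.rpow_add hΛ0, Real.rpow_natCast,
      Real.rpow_logb hΛ0 hΛ.ne' (hr b), Real.rpow_logb hΛ0 hΛ.ne' (hr a)]
    exact hab
  obtain ⟨x, hb, ha, hgap⟩ :=
    exists_forall_le_or_add_one_le (f := fun k => Real.logb Λ (r k)) hlog
  simp only [Real.logb_le_iff_le_rpow hΛ (hr _), Real.le_logb_iff_rpow_le hΛ (hr _),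
    Real.rpow_add_one hΛ0.ne'] at hb ha hgap
  exact ⟨Λ ^ x, Real.rpow_pos_of_pos hΛ0 x, hb, ha, hgap⟩

theorem exists_mem_le_norm_sq_of_le_norm_sum {E : Type*} [SeminormedAddCommGroup E]
    {m : Multiset E} {Λ : ℝ} (hΛ : 0 < Λ) (hcard : (m.card : ℝ) ^ 2 ≤ Λ) (hsum : Λ ≤ ‖m.sum‖) :
    ∃ z ∈ m, Λ ≤ ‖z‖ ^ 2 := by
  have hne : m.toList ≠ [] := by
    rintro h
    rw [Multiset.toList_eq_nil] at h
    simp only [h, Multiset.sum_zero, norm_zero] at hsum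
    exact hsum.not_gt hΛ
  have hle : (m.toList.map fun _ => √Λ).sum ≤ (m.toList.map fun z => ‖z‖).sum := by
    rw [List.map_const', List.sum_replicate, Multiset.length_toList, nsmul_eq_mul]
    calc m.card * √Λ ≤ √Λ * √Λ := by gcongr; exact Real.le_sqrt_of_sq_le hcard
      _ = Λ := Real.mul_self_sqrt hΛ.le
      _ ≤ ‖m.sum‖ := hsum
      _ ≤ (m.map fun z => ‖z‖).sum := norm_multiset_sum_le m
      _ = _ := by rw [← Multiset.coe_toList m, Multiset.map_coe, Multiset.sum_coe,
        Multiset.coe_toList]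
  obtain ⟨z, hz, hzle⟩ := List.exists_le_of_sum_le hne _ _ hle
  exact ⟨z, Multiset.mem_toList.1 hz, (Real.sqrt_le_left (norm_nonneg z)).1 hzle⟩

theorem exists_mul_norm_sq_le_norm_sq {ι 𝕜 : Type*} [Fintype ι] [NormedField 𝕜] {l : ι → 𝕜}
    {Λ : ℝ} (hΛ : 0 < Λ) (hcard : (Fintype.card ι : ℝ) ^ 2 ≤ Λ) (hsum : Λ ≤ ‖∑ j, l j‖)
    (hprod : ‖∏ j, l j‖ = 1) : ∃ a b, ‖l b‖ ^ 2 * Λ ≤ ‖l a‖ ^ 2 := by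
  obtain ⟨z, hz, ha⟩ := exists_mem_le_norm_sq_of_le_norm_sum (m := Finset.univ.val.map l) hΛ
    (by simpa using hcard) hsum
  obtain ⟨a, -, rfl⟩ := Multiset.mem_map.1 hz
  obtain ⟨b, hb⟩ : ∃ b, ‖l b‖ ≤ 1 := by
    by_contra! hlt
    have : ∏ _j : ι, (1 : ℝ) < ∏ j, ‖l j‖ := Finset.prod_lt_prod_of_nonempty
      (fun _ _ => zero_lt_one) (fun j _ => hlt j) ⟨a, Finset.mem_univ a⟩
    rw [Finset.prod_const_one, ← norm_prod, hprod] at this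
    exact this.false
  refine ⟨a, b, le_trans ?_ ha⟩
  exact mul_le_of_le_one_left hΛ.le (pow_le_one₀ (norm_nonneg _) hb)

theorem exists_mul_eq_smul_of_le_norm_trace {n : ℕ} {x : Matrix (Fin n) (Fin n) ℂ} {Λ : ℝ}
    (hΛ : 0 < Λ) (hn : (n : ℝ) ^ 2 ≤ Λ) (htrace : Λ ≤ ‖x.trace‖) :
    ∃ (μ : ℂ) (y : Matrix (Fin n) (Fin n) ℂ), y ≠ 0 ∧ x * y = μ • y ∧ Λ ≤ ‖μ‖ ^ 2 := by
  have hcard : x.charpoly.roots.card = n := by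
    rw [← (IsAlgClosed.splits x.charpoly).natDegree_eq_card_roots,
      Matrix.charpoly_natDegree_eq_dim, Fintype.card_fin]
  rw [Matrix.trace_eq_sum_roots_charpoly] at htrace
  obtain ⟨μ, hμ, hΛμ⟩ := exists_mem_le_norm_sq_of_le_norm_sum hΛ (by rwa [hcard]) htrace
  have hdet : (Matrix.scalar (Fin n) μ - x).det = 0 := by
    rw [← Matrix.eval_charpoly]
    exact Polynomial.isRoot_of_mem_roots hμ
  obtain ⟨v, hv, hv0⟩ := Matrix.exists_mulVec_eq_zero_iff.2 hdet
  obtain ⟨i, hi⟩ := Function.ne_iff.1 hv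
  have hxv : x.mulVec v = μ • v := by
    rw [Matrix.sub_mulVec, sub_eq_zero] at hv0
    rw [← hv0, Matrix.scalar_apply, ← Matrix.smul_one_eq_diagonal, Matrix.smul_mulVec,
      Matrix.one_mulVec]
  refine ⟨μ, Matrix.replicateCol (Fin n) v, fun h => hi (congrFun₂ h i i), ?_, hΛμ⟩
  rw [← Matrix.replicateCol_mulVec, hxv, Matrix.replicateCol_smul]

end SpectralGap

section DominatedWords

open Matrix Algebra

attribute [local instance] Matrix.linftyOpNormedAddCommGroup Matrix.linftyOpNormedRing
  Matrix.linftyOpNormedAlgebra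

theorem IsTransverse.mono {R : Type*} [NormedRing R] {P s : R} {K K' : ℝ}
    (h : IsTransverse P s K) (hK : K ≤ K') : IsTransverse P s K' where
  one_le := h.one_le.trans hK
  idem := h.idem
  norm_proj_le := h.norm_proj_le.trans hK
  norm_compl_le := h.norm_compl_le.trans hK
  norm_le := h.norm_le.trans hK
  exists_corner := by
    obtain ⟨C, hC, hle⟩ := h.exists_corner
    exact ⟨C, hC, hle.trans hK⟩
  one_le_mul_norm := h.one_le_mul_norm.trans (by gcongr)

section Diagonal

variable {ι κ 𝕜 : Type*} [Fintype ι] [DecidableEq ι] [Fintype κ] [DecidableEq κ]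
  [NontriviallyNormedField 𝕜]
  {b : Module.Basis κ 𝕜 (Matrix ι ι 𝕜)} {d : ι → 𝕜} {I : Finset ι} {K : ℝ}

theorem diagonal_mul_coordProj_eq_sum (d : ι → 𝕜) (I : Finset ι) :
    diagonal d * coordProj 𝕜 I = ∑ j ∈ I, d j • single j j 1 := by
  rw [coordProj_eq_sum_single, Finset.mul_sum]
  refine Finset.sum_congr rfl fun j _ => ?_
  ext i k
  simp +contextual [diagonal_mul, single_apply, eq_comm (a := j)]

theorem norm_leftMulMatrix_diagonal_mul_coordProj_le
    (hsingle : ∀ j, ‖leftMulMatrix b (single j j 1)‖ ≤ K) {θ : ℝ} (hθ : 0 ≤ θ)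
    (hd : ∀ j ∈ I, ‖d j‖ ≤ θ) :
    ‖leftMulMatrix b (diagonal d * coordProj 𝕜 I)‖ ≤ Fintype.card ι * (θ * K) := by
  rw [diagonal_mul_coordProj_eq_sum, map_sum]
  calc ‖∑ j ∈ I, leftMulMatrix b (d j • single j j 1)‖
      ≤ ∑ j ∈ I, ‖leftMulMatrix b (d j • single j j 1)‖ := norm_sum_le _ _
    _ = ∑ j ∈ I, ‖d j‖ * ‖leftMulMatrix b (single j j 1)‖ := by
        simp only [_root_.map_smul, norm_smul]
    _ ≤ ∑ j ∈ I, θ * ‖leftMulMatrix b (single j j 1)‖ :=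
        Finset.sum_le_sum fun j hj => by gcongr; exact hd j hj
    _ ≤ ∑ j, θ * ‖leftMulMatrix b (single j j 1)‖ :=
        Finset.sum_le_univ_sum_of_nonneg fun j => by positivity
    _ ≤ ∑ _j : ι, θ * K := Finset.sum_le_sum fun j _ => by gcongr; exact hsingle j
    _ = Fintype.card ι * (θ * K) := by rw [Finset.sum_const, Finset.card_univ, nsmul_eq_mul]

theorem separatesWords_diagonal [CompleteSpace 𝕜] {s : Matrix ι ι 𝕜} {θ η : ℝ}
    (h : IsTransverse (leftMulMatrix b (coordProj 𝕜 I)) (leftMulMatrix b s) K)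
    (hsingle : ∀ j, ‖leftMulMatrix b (single j j 1)‖ ≤ K) (hs : IsUnit s) (hd : ∀ j, d j ≠ 0)
    (hθ : 0 ≤ θ) (hdθ : ∀ j ∉ I, ‖d j‖ ≤ θ) (hη : 0 < η) (hdη : ∀ j ∈ I, η ≤ ‖d j‖)
    (hgap : 48 * Fintype.card ι ^ 2 * K ^ 10 * θ ≤ η) :
    SeparatesWords (diagonal d) (s * diagonal d) := by
  have : @CompleteSpace (Matrix κ κ 𝕜) PseudoMetricSpace.toUniformSpace :=
    FiniteDimensional.complete 𝕜 _
  have hinv : diagonal d * diagonal d⁻¹ = 1 := by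
    rw [diagonal_mul_diagonal, ← diagonal_one]
    exact congrArg diagonal (funext fun j => mul_inv_cancel₀ (hd j))
  set L := leftMulMatrix b
  let D := Units.map (L : Matrix ι ι 𝕜 →* Matrix κ κ 𝕜)
    ⟨diagonal d, diagonal d⁻¹, hinv, mul_eq_one_comm.1 hinv⟩
  have hcommute (d : ι → 𝕜) : Commute (diagonal d) (coordProj 𝕜 I) := commute_diagonal _ _
  have hlarge : ‖L (coordProj 𝕜 I) * (↑D⁻¹ : Matrix κ κ 𝕜)‖ ≤ Fintype.card ι * (η⁻¹ * K) := by
    change ‖L (coordProj 𝕜 I) * L (diagonal d⁻¹)‖ ≤ _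
    rw [← _root_.map_mul, ← (hcommute _).eq]
    refine norm_leftMulMatrix_diagonal_mul_coordProj_le hsingle (by positivity) fun j hj => ?_
    rw [Pi.inv_apply, _root_.norm_inv]
    exact inv_anti₀ hη (hdη j hj)
  have hsmall : ‖(D : Matrix κ κ 𝕜) * (1 - L (coordProj 𝕜 I))‖ ≤ Fintype.card ι * (θ * K) := by
    change ‖L (diagonal d) * (1 - L (coordProj 𝕜 I))‖ ≤ _
    rw [← _root_.map_one L, ← _root_.map_sub, one_sub_coordProj, ← _root_.map_mul]
    exact norm_leftMulMatrix_diagonal_mul_coordProj_le hsingle hθ fun j hj =>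
      hdθ j (Finset.mem_compl.1 hj)
  have hwords := h.separatesWords (D := D) (hs.map L).isRegular.left ((hcommute d).map L) <| by
    have := h.one_le
    calc 48 * K ^ 8 * _ ≤ 48 * K ^ 8 *
          (Fintype.card ι * (θ * K) * (Fintype.card ι * (η⁻¹ * K))) := by gcongr
      _ = 48 * Fintype.card ι ^ 2 * K ^ 10 * θ / η := by field_simp
      _ ≤ 1 := (div_le_one hη).2 hgap
  refine SeparatesWords.of_map (L : Matrix ι ι 𝕜 →* Matrix κ κ 𝕜) ?_
  rw [_root_.map_mul]
  exact hwords

end Diagonal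

variable {n : ℕ} {Ω κ : Type*} {Λ : Ω → ℝ} [Fintype κ] [DecidableEq κ]

section UniformDiagonal

variable {𝕜 : Type*} [NontriviallyNormedField 𝕜]
  {b : Ω → Module.Basis κ 𝕜 (Matrix (Fin n) (Fin n) 𝕜)} {l : Ω → Fin n → 𝕜}
  {s : Ω → Matrix (Fin n) (Fin n) 𝕜}
  (hl : PolyBounded Λ fun ω => leftMulMatrix (b ω) (diagonal (l ω)))
  (hs : PolyBounded Λ fun ω => leftMulMatrix (b ω) (s ω))
  (hinv : ∀ ω, HasLargeInvariants (diagonal (l ω)) (s ω))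
  (hΛ : ∀ ω, 2 ≤ Λ ω)

include hl hs hinv hΛ

theorem exists_forall_isTransverse : ∃ c : ℕ, ∀ ω,
    (∀ j, ‖leftMulMatrix (b ω) (single j j 1)‖ ≤ Λ ω ^ c) ∧
    ∀ I : Finset (Fin n), ∀ j ∉ I, ∀ k ∈ I,
      IsTransverse (leftMulMatrix (b ω) (coordProj 𝕜 I)) (leftMulMatrix (b ω) (s ω)) (Λ ω ^ c) := by
  have hΛ1 (ω : Ω) : 1 ≤ Λ ω := one_le_two.trans (hΛ ω)
  choose c hc using fun j : Fin n =>
    (hl.leftMulMatrix_single (fun ω => (hinv ω).trace) j).exists_forall_le_pow hΛ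
  have htransverse (p : Finset (Fin n) × Fin n × Fin n) : ∃ c : ℕ, p.2.1 ∉ p.1 → p.2.2 ∈ p.1 →
      ∀ ω, IsTransverse (leftMulMatrix (b ω) (coordProj 𝕜 p.1)) (leftMulMatrix (b ω) (s ω))
        (Λ ω ^ c) := by
    by_cases hp : p.2.1 ∉ p.1 ∧ p.2.2 ∈ p.1
    · obtain ⟨c, hc⟩ := exists_forall_isTransverse_of_mem hl hs hinv hΛ hp.1 hp.2
      exact ⟨c, fun _ _ => hc⟩
    · exact ⟨0, fun hj hk => (hp ⟨hj, hk⟩).elim⟩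
  choose c' hc' using htransverse
  refine ⟨∑ j, c j + ∑ p, c' p, fun ω => ⟨fun j => (hc j ω).trans ?_, fun I j hj k hk =>
    (hc' (I, j, k) hj hk ω).mono ?_⟩⟩ <;> refine pow_le_pow_right₀ (hΛ1 ω) ?_
  · exact (Finset.single_le_sum_of_canonicallyOrdered (Finset.mem_univ j)).trans
      (Nat.le_add_right _ _)
  · exact (Finset.single_le_sum_of_canonicallyOrdered (Finset.mem_univ (I, j, k))).trans
      (Nat.le_add_left _ _)

theorem exists_forall_separatesWords_diagonal [CompleteSpace 𝕜] (hn : ∀ ω, (n : ℝ) ^ 2 ≤ Λ ω)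
    (hunit : ∀ ω, IsUnit (s ω)) (htrace : ∀ ω, Λ ω ≤ ‖(diagonal (l ω)).trace‖)
    (hdet : ∀ ω, ‖(diagonal (l ω)).det‖ = 1) :
    ∃ N : ℕ, ∀ ω, SeparatesWords (diagonal (l ω) ^ N) (s ω * diagonal (l ω) ^ N) := by
  obtain ⟨c, hc⟩ := exists_forall_isTransverse hl hs hinv hΛ
  obtain ⟨c', hc'⟩ := pow_unbounded_of_one_lt (48 * (n : ℝ) ^ 2) one_lt_two
  set M := c' + c * 10 with hM
  refine ⟨2 * n * M, fun ω => ?_⟩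
  obtain ⟨hsingle, htransverse⟩ := hc ω
  have hΛω := hΛ ω
  have hΛ0 : 0 < Λ ω := two_pos.trans_le hΛω
  have htr := htrace ω
  have hdetω := hdet ω
  rw [trace_diagonal] at htr
  rw [det_diagonal] at hdetω
  have hl0 (j : Fin n) : l ω j ≠ 0 := fun h => by
    rw [Finset.prod_eq_zero (Finset.mem_univ j) h, _root_.norm_zero] at hdetω
    exact zero_ne_one hdetω
  obtain ⟨a, b, hab⟩ := exists_mul_norm_sq_le_norm_sq hΛ0 (by simpa using hn ω) htr hdetω
  obtain ⟨θ, hθ, hb, ha, hgap⟩ := exists_forall_le_or_mul_le (r := fun j => ‖l ω j‖ ^ (2 * n))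
    (a := a) (b := b) (fun j => pow_pos (norm_pos_iff.2 (hl0 j)) _) (one_lt_two.trans_le hΛω) 
    (by simpa only [mul_pow, pow_mul, Fintype.card_fin] using
      pow_le_pow_left₀ (by positivity) hab n)
  let I := Finset.univ.filter fun j => θ < ‖l ω j‖ ^ (2 * n)
  have hmem (j : Fin n) : j ∈ I ↔ θ < ‖l ω j‖ ^ (2 * n) := by simp [I]
  have haI : a ∈ I := (hmem a).2 (lt_of_lt_of_le (lt_mul_of_one_lt_right hθ (by linarith)) ha)
  have hbI : b ∉ I := fun h => ((hmem b).1 h).not_ge hb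
  rw [diagonal_pow]
  refine separatesWords_diagonal (htransverse I b hbI a haI) hsingle (hunit ω)
    (fun j => pow_ne_zero _ (hl0 j)) (pow_nonneg hθ.le M) (fun j hj => ?_)
    (pow_pos (mul_pos hθ hΛ0) M) (fun j hj => ?_) ?_
  · rw [Pi.pow_apply, norm_pow, pow_mul]
    gcongr
    exact not_lt.1 fun h => hj ((hmem j).2 h)
  · rw [Pi.pow_apply, norm_pow, pow_mul]
    gcongr
    exact (hgap j).resolve_left ((hmem j).1 hj).not_ge
  · rw [mul_pow, mul_comm, hM, pow_add (Λ ω), ← pow_mul, Fintype.card_fin]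
    gcongr
    exact hc'.le.trans (by gcongr)

end UniformDiagonal

theorem exists_forall_separatesWords {b : Ω → Module.Basis κ ℂ (Matrix (Fin n) (Fin n) ℂ)}
    {A s : Ω → Matrix (Fin n) (Fin n) ℂ} (hA : PolyBounded Λ fun ω => leftMulMatrix (b ω) (A ω))
    (hs : PolyBounded Λ fun ω => leftMulMatrix (b ω) (s ω))
    (hinv : ∀ ω, HasLargeInvariants (A ω) (s ω)) (hΛ : ∀ ω, 2 ≤ Λ ω)
    (hn : ∀ ω, (n : ℝ) ^ 2 ≤ Λ ω) (hunit : ∀ ω, IsUnit (s ω))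
    (htrace : ∀ ω, Λ ω ≤ ‖(A ω).trace‖) (hdet : ∀ ω, ‖(A ω).det‖ = 1) :
    ∃ N : ℕ, ∀ ω, SeparatesWords (A ω ^ N) (s ω * A ω ^ N) := by
  choose l g hg using fun ω => exists_units_conj_diagonal (hinv ω).isGeneric.trace
  let conj (ω : Ω) : Matrix (Fin n) (Fin n) ℂ ≃ₐ[ℂ] Matrix (Fin n) (Fin n) ℂ :=
    MulSemiringAction.toAlgEquiv ℂ _ (ConjAct.toConjAct (g ω)⁻¹)
  have hconj (ω : Ω) (x : Matrix (Fin n) (Fin n) ℂ) :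
      conj ω x = (g ω)⁻¹.val * x * (g ω)⁻¹⁻¹.val := ConjAct.units_smul_def _ _
  have hconjA (ω : Ω) : conj ω (A ω) = diagonal (l ω) := by
    rw [hconj, inv_inv, hg]
    simp [Matrix.mul_assoc]
  have htr (ω : Ω) : (diagonal (l ω)).trace = (A ω).trace := by
    rw [← hconjA, hconj, trace_mul_cycle, Units.inv_mul, Matrix.one_mul]
  have hdt (ω : Ω) : (diagonal (l ω)).det = (A ω).det := by
    rw [← hconjA, hconj, det_units_conj]
  have hinv' (ω : Ω) : HasLargeInvariants (diagonal (l ω)) (conj ω (s ω)) := by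
    refine .of_units_conj (g ω) ?_
    rw [← hg]
    simpa [hconj, Matrix.mul_assoc] using hinv ω
  obtain ⟨N, hN⟩ := exists_forall_separatesWords_diagonal
    (b := fun ω => (b ω).map (conj ω).toLinearEquiv) (l := l) (s := fun ω => conj ω (s ω))
    (by simpa only [← hconjA, leftMulMatrix_basis_map_algEquiv] using hA)
    (by simpa only [leftMulMatrix_basis_map_algEquiv] using hs)
    hinv' hΛ hn (fun ω => (hunit ω).map (conj ω))
    (fun ω => (htr ω).symm ▸ htrace ω) (fun ω => (hdt ω).symm ▸ hdet ω)
  refine ⟨N, fun ω => .of_map (conj ω : _ →* Matrix (Fin n) (Fin n) ℂ) ?_⟩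
  simpa only [_root_.map_mul, _root_.map_pow, MonoidHom.coe_coe, hconjA] using hN ω

end DominatedWords

section MaximalConfiguration

open Matrix Algebra

attribute [local instance] Matrix.linftyOpNormedAddCommGroup Matrix.linftyOpNormedRing
  Matrix.linftyOpNormedAlgebra

variable {n : ℕ} {Γ : Type*} [Group Γ] {ρ : Γ →* Matrix (Fin n) (Fin n) ℤ} {R e : ℕ}

/-- The complexification of an integral representation. -/
def complexRep (ρ : Γ →* Matrix (Fin n) (Fin n) ℤ) : Γ →* Matrix (Fin n) (Fin n) ℂ :=
  (Int.castRingHom ℂ).mapMatrix.toMonoidHom.comp ρ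

theorem norm_trace_complexRep (g : Γ) : ‖(complexRep ρ g).trace‖ = |((ρ g).trace : ℝ)| := by
  rw [← Complex.norm_intCast]
  exact congrArg _ (AddMonoidHom.map_trace (Int.castRingHom ℂ).toAddMonoidHom _).symm

theorem norm_det_complexRep (g : Γ) : ‖(complexRep ρ g).det‖ = 1 := by
  have habs : |(ρ g).det| = 1 :=
    Int.isUnit_iff_abs_eq.1 ((Matrix.isUnit_iff_isUnit_det _).1 ((Group.isUnit g).map ρ))
  have hdet : (complexRep ρ g).det = (ρ g).det := ((Int.castRingHom ℂ).map_det (ρ g)).symm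
  rw [hdet, Complex.norm_intCast]
  exact_mod_cast habs

/-- A generic configuration for some generating set, together with a word of largest trace in the
ball of radius `2 * R + 1`. All estimates are polynomial in that trace, uniformly over this type. -/
structure MaximalConfiguration (ρ : Γ →* Matrix (Fin n) (Fin n) ℤ) (R e : ℕ) where
  generators : Set Γ
  config : GenericConfiguration ρ R e generators
  word : Γ
  word_mem : word ∈ wordBall generators (2 * R + 1)
  norm_trace_le : ∀ x ∈ wordBall generators (2 * R + 1),
    ‖(complexRep ρ x).trace‖ ≤ ‖(complexRep ρ word).trace‖

theorem GenericConfiguration.exists_maximalConfiguration {S : Set Γ} (hS : S.Finite)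
    (C : GenericConfiguration ρ R e S) : ∃ M : MaximalConfiguration ρ R e, M.generators = S := by
  obtain ⟨w, hw, hmax⟩ := Set.exists_max_image (wordBall S (2 * R + 1))
    (fun x => ‖(complexRep ρ x).trace‖) (finite_wordBall hS _) ⟨1, one_mem_wordBall S _⟩
  exact ⟨⟨S, C, w, hw, hmax⟩, rfl⟩

namespace MaximalConfiguration

/-- The largest absolute value of a trace on the ball of radius `2 * R + 1`. -/
noncomputable def maxTrace (C : MaximalConfiguration ρ R e) : ℝ := ‖(complexRep ρ C.word).trace‖

theorem sq_le_maxTrace (C : MaximalConfiguration ρ R e) : (n : ℝ) ^ 2 ≤ C.maxTrace := by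
  obtain ⟨z, hz, hle⟩ := C.config.exists_le_trace
  refine le_trans ?_ (C.norm_trace_le z (wordBall_mono _ (by lia) hz))
  rw [norm_trace_complexRep]
  exact_mod_cast hle

theorem two_le_maxTrace (hn : 2 ≤ n) (C : MaximalConfiguration ρ R e) : 2 ≤ C.maxTrace := by
  have hn' : (2 : ℝ) ≤ n := by exact_mod_cast hn
  nlinarith [C.sq_le_maxTrace]

theorem one_le_norm_det_traceGram_complexRep (C : MaximalConfiguration ρ R e) :
    1 ≤ ‖(traceGram fun k => complexRep ρ (C.config.u k)).det‖ := by
  have hdet := congrArg det (map_traceGram (Int.castRingHom ℂ) fun k => ρ (C.config.u k))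
  rw [← RingHom.map_det, eq_intCast] at hdet
  change 1 ≤ ‖(traceGram fun k => (Int.castRingHom ℂ).mapMatrix (ρ (C.config.u k))).det‖
  rw [← hdet, Complex.norm_intCast]
  exact_mod_cast Int.one_le_abs C.config.gram_ne_zero

theorem polyBounded_trace_of_mem_wordBall {Ω : Type*}
    {C : Ω → MaximalConfiguration ρ R e} {x : Ω → Γ}
    (hx : ∀ ω, x ω ∈ wordBall (C ω).generators (2 * R + 1)) :
    PolyBounded (fun ω => (C ω).maxTrace) fun ω => (complexRep ρ (x ω)).trace :=
  PolyBounded.self.mono fun ω => ((C ω).norm_trace_le _ (hx ω)).trans (le_abs_self _)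

variable [NeZero n]

/-- The basis of the space of complex matrices formed by the words `u k` of the configuration. -/
noncomputable def basis (C : MaximalConfiguration ρ R e) :
    Module.Basis (Fin n × Fin n) ℂ (Matrix (Fin n) (Fin n) ℂ) :=
  basisOfLinearIndependentOfCardEqFinrank
    (linearIndependent_of_det_traceGram_ne_zero (norm_pos_iff.1
      (zero_lt_one.trans_le C.one_le_norm_det_traceGram_complexRep)))
    (by simp [Module.finrank_matrix])

theorem basis_apply (C : MaximalConfiguration ρ R e) (k : Fin n × Fin n) :
    C.basis k = complexRep ρ (C.config.u k) := by
  simp [basis]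

theorem one_le_norm_det_traceGram_basis (C : MaximalConfiguration ρ R e) :
    1 ≤ ‖(traceGram C.basis).det‖ := by
  simpa only [← basis_apply] using C.one_le_norm_det_traceGram_complexRep

variable {Ω : Type*} (C : Ω → MaximalConfiguration ρ R e) {x : Ω → Γ}

theorem polyBounded_trace_basis_mul_basis (i j : Fin n × Fin n) :
    PolyBounded (fun ω => (C ω).maxTrace) fun ω => ((C ω).basis i * (C ω).basis j).trace := by
  simp only [basis_apply, ← _root_.map_mul]
  exact polyBounded_trace_of_mem_wordBall fun ω => wordBall_mono _ (by lia)
    (mul_mem_wordBall ((C ω).config.u_mem i) ((C ω).config.u_mem j))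

theorem polyBounded_leftMulMatrix_of_mem_wordBall {m : ℕ}
    (hx : ∀ ω, x ω ∈ wordBall (C ω).generators m) :
    PolyBounded (fun ω => (C ω).maxTrace) fun ω =>
      leftMulMatrix (C ω).basis (complexRep ρ (x ω)) := by
  have hone {y : Ω → Γ} (hy : ∀ ω, y ω ∈ wordBall (C ω).generators 1) :
      PolyBounded (fun ω => (C ω).maxTrace) fun ω =>
        leftMulMatrix (C ω).basis (complexRep ρ (y ω)) := by
    refine .leftMulMatrix_of_trace_mul_mul (polyBounded_trace_basis_mul_basis C)
      (fun ω => (C ω).one_le_norm_det_traceGram_basis) fun i j => ?_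
    simp only [basis_apply, ← _root_.map_mul]
    exact polyBounded_trace_of_mem_wordBall fun ω => wordBall_mono _ (by lia)
      (mul_mem_wordBall (mul_mem_wordBall ((C ω).config.u_mem i) (hy ω)) ((C ω).config.u_mem j))
  induction m generalizing x with
  | zero => exact hone fun ω => wordBall_mono _ zero_le_one (hx ω)
  | succ m ih =>
    simp only [wordBall_add, Set.mem_mul] at hx
    choose y hy z hz hyz using hx
    simp only [← hyz, _root_.map_mul]
    exact (ih hy).mul (hone hz)

theorem polyBounded_leftMulMatrix_of_norm_trace_le
    (hx : ∀ ω i, ‖(complexRep ρ (x ω * (C ω).config.u i)).trace‖ ≤ (C ω).maxTrace) :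
    PolyBounded (fun ω => (C ω).maxTrace) fun ω =>
      leftMulMatrix (C ω).basis (complexRep ρ (x ω)) := by
  refine .leftMulMatrix_of_trace_mul (polyBounded_trace_basis_mul_basis C)
    (fun ω => (C ω).one_le_norm_det_traceGram_basis) (fun i => ?_) fun i => ?_
  · simp only [basis_apply]
    exact polyBounded_leftMulMatrix_of_mem_wordBall C fun ω => (C ω).config.u_mem i
  · refine PolyBounded.self.mono fun ω => le_trans ?_ (le_abs_self _)
    rw [basis_apply, trace_mul_comm, ← _root_.map_mul]
    exact hx ω i

theorem maxTrace_pow_le_norm_leftMulMatrix_sq (hn : 2 ≤ n) (C : MaximalConfiguration ρ R e)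
    (k : ℕ) : C.maxTrace ^ k ≤ ‖leftMulMatrix C.basis (complexRep ρ (C.word ^ k))‖ ^ 2 := by
  have hpos : 0 < C.maxTrace := two_pos.trans_le (C.two_le_maxTrace hn)
  obtain ⟨μ, y, hy, hxy, hμ⟩ := exists_mul_eq_smul_of_le_norm_trace hpos C.sq_le_maxTrace le_rfl
  have hpow : complexRep ρ (C.word ^ k) * y = μ ^ k • y := by
    rw [_root_.map_pow]
    induction k with
    | zero => simp
    | succ k ih => rw [pow_succ, Matrix.mul_assoc, hxy, Matrix.mul_smul, ih, smul_smul, pow_succ']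
  calc C.maxTrace ^ k ≤ (‖μ‖ ^ 2) ^ k := by gcongr
    _ = ‖μ ^ k‖ ^ 2 := by rw [norm_pow, pow_right_comm]
    _ ≤ _ := by gcongr; exact norm_le_norm_leftMulMatrix_of_mul_eq_smul C.basis hpow hy

variable (ρ R) in
theorem exists_forall_exists_maxTrace_lt (hn : 2 ≤ n) (he : 0 < e) :
    ∃ m : ℕ, ∀ C : MaximalConfiguration ρ R e, ∃ i,
      C.maxTrace < ‖(complexRep ρ ((C.word ^ m) ^ e * C.config.u i)).trace‖ := by
  obtain ⟨c, hc⟩ := (polyBounded_leftMulMatrix_of_norm_trace_le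
    (Ω := {p : MaximalConfiguration ρ R e × ℕ //
      ∀ i, ‖(complexRep ρ (p.1.word ^ p.2 * p.1.config.u i)).trace‖ ≤ p.1.maxTrace})
    (fun p => p.1.1) fun p => p.2).exists_forall_le_pow fun p => p.1.1.two_le_maxTrace hn
  refine ⟨2 * c + 1, fun C => ?_⟩
  by_contra! hle
  rw [← pow_mul] at hle
  have hlt : 1 < C.maxTrace := one_lt_two.trans_le (C.two_le_maxTrace hn)
  have hpow : C.maxTrace ^ ((2 * c + 1) * e) ≤ C.maxTrace ^ (c * 2) := by
    rw [pow_mul _ c]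
    exact (C.maxTrace_pow_le_norm_leftMulMatrix_sq hn _).trans
      (pow_le_pow_left₀ (norm_nonneg _) (hc ⟨(C, _), hle⟩) 2)
  have := (pow_le_pow_iff_right₀ hlt).1 hpow
  nlinarith

variable (ρ R) in
theorem exists_forall_exists_separatesWords (hn : 2 ≤ n) (he : 0 < e) :
    ∃ L : ℕ, 0 < L ∧ ∀ C : MaximalConfiguration ρ R e, ∃ a ∈ wordBall C.generators L,
      ∃ b ∈ wordBall C.generators L, SeparatesWords a b := by
  obtain ⟨m, hm⟩ := exists_forall_exists_maxTrace_lt ρ R hn he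
  choose i hi using hm
  set A : MaximalConfiguration ρ R e → Γ := fun C => (C.word ^ m) ^ e * C.config.u (i C)
  have hA (C : MaximalConfiguration ρ R e) :
      A C ∈ wordBall C.generators ((2 * R + 1) * m * e + R) :=
    mul_mem_wordBall (pow_mem_wordBall (pow_mem_wordBall C.word_mem m) e) (C.config.u_mem _)
  obtain ⟨N, hN⟩ := exists_forall_separatesWords (b := basis)
    (polyBounded_leftMulMatrix_of_mem_wordBall _root_.id hA)
    (polyBounded_leftMulMatrix_of_mem_wordBall _root_.id fun C => C.config.t_mem (i C))
    (fun C => (C.config.isGeneric (i C) (C.word ^ m)).hasLargeInvariants)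
    (two_le_maxTrace hn) sq_le_maxTrace (fun C => (Group.isUnit _).map (complexRep ρ))
    (fun C => (hi C).le) fun C => norm_det_complexRep (A C)
  set L := ((2 * R + 1) * m * e + R) * N
  refine ⟨R + L + 1, by lia, fun C => ⟨A C ^ N, ?_, C.config.t (i C) * A C ^ N, ?_,
    .of_map (complexRep ρ) ?_⟩⟩
  · exact wordBall_mono _ (by lia) (pow_mem_wordBall (hA C) N)
  · exact wordBall_mono _ (by lia)
      (mul_mem_wordBall (C.config.t_mem (i C)) (pow_mem_wordBall (hA C) N))
  · simpa only [_root_.map_mul, _root_.map_pow] using hN C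

end MaximalConfiguration

theorem one_lt_minGrowth_of_forall_map_surjective (hΓ : Group.FG Γ) (hn : 2 ≤ n)
    (hρ : ∀ (p : ℕ) [Fact p.Prime] (M : Matrix (Fin n) (Fin n) (ZMod p)), M.det = 1 →
      ∃ g, (ρ g).map (Int.castRingHom (ZMod p)) = M) :
    1 < minGrowth Γ := by
  have : NeZero n := ⟨by lia⟩
  obtain ⟨R, e, he, hconfig⟩ := exists_genericConfiguration hn ρ hρ
  obtain ⟨L, hL, hwords⟩ := MaximalConfiguration.exists_forall_exists_separatesWords ρ R hn he
  refine one_lt_minGrowth hΓ hL fun S hS => ?_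
  obtain ⟨C, hC⟩ := (hconfig S hS).some.exists_maximalConfiguration S.finite_toSet
  exact hC ▸ hwords C

end MaximalConfiguration

/-- for `n ≥ 2`, `Out(Fₙ) = Aut(Fₙ)/Inn(Fₙ)` has uniformly exponential
growth. -/
theorem out_freeGroup_uniform_exponential_growth (n : ℕ) (hn : 2 ≤ n) :
    1 < minGrowth (MulAut (FreeGroup (Fin n)) ⧸
      (MulAut.conj : FreeGroup (Fin n) →* MulAut (FreeGroup (Fin n))).range) := by
  have : Nontrivial (Fin n) := Fin.nontrivial_iff_two_le.2 hn
  have := fg_mulAut_freeGroup n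
  exact one_lt_minGrowth_of_forall_map_surjective (ρ := outerHomologyRep) inferInstance hn
    fun p _ _ hM => exists_outerHomologyRep_map_eq p hM
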